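/- arXiv:1504.05405 — 4 statements merged into one kernel-verified Lean document; each statement's English description precedes it below -/
import Mathlib

section
/- For every dimension d ≥ 1, every α ∈ [0,1) and every η ∈ {−1,0,+1}^d there exists a critical probability p_L(α,d,η) ∈ (0,1) such that for all p ∈ [0, p_L(α,d,η)) one has P_p(LIP(∇^{α,d}_η)) = P_p(LIP^{α,d}_η) = 0, while for all p ∈ (p_L(α,d,η), 1] one has P_p(LIP(∇^{α,d}_η)) = P_p(LIP^{α,d}_η) = 1. In particular, Lipschitz percolation above the tilted plane and above the inverted pyramid undergo a nontrivial phase transition at the same critical probability. -/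
open MeasureTheory Filter ENNReal

/-- Sites of `ℤ^{d+1}`. -/
abbrev Site (d : ℕ) := Fin (d + 1) → ℤ

/-- Site-percolation configurations on `ℤ^{d+1}`: a site is open iff its value is `true`. -/
abbrev Config (d : ℕ) := Site d → Bool

/-- `P` is the i.i.d. Bernoulli(`p`) product measure on `{0,1}^ι`: it is a probability
measure whose cylinder events have the correct product probabilities. -/
def IsBernoulli {ι : Type*} (p : ℝ) (P : Measure (ι → Bool)) : Prop :=
  IsProbabilityMeasure P ∧
    ∀ (s : Finset ι) (f : ι → Bool),
      P {ω | ∀ x ∈ s, ω x = f x} =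
        ∏ x ∈ s, (if f x then ENNReal.ofReal p else ENNReal.ofReal (1 - p))

/-- A function `F : ℤ^d → ℤ` is Lipschitz: `‖x − y‖₁ = 1 → |F x − F y| ≤ 1`. -/
def IsLipschitzFn {d : ℕ} (F : (Fin d → ℤ) → ℤ) : Prop :=
  ∀ x y : Fin d → ℤ, (∑ i, |x i - y i|) = 1 → |F x - F y| ≤ 1

/-- Height `⌊α ∑ᵢ ηᵢ xᵢ⌋` of the tilted plane `L^{α,d}_η` above `x ∈ ℤ^d`. -/
noncomputable def planeHt (α : ℝ) {d : ℕ} (η x : Fin d → ℤ) : ℤ :=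
  ⌊α * ∑ i, (η i : ℝ) * (x i : ℝ)⌋

/-- `η ∈ {-1,0,1}^d`. -/
def IsSign {d : ℕ} (η : Fin d → ℤ) : Prop := ∀ i, η i = -1 ∨ η i = 0 ∨ η i = 1

/-- The event `LIP^{α,d}_η` that there is an open Lipschitz surface lying (strictly) above
the tilted plane `L^{α,d}_η`. -/
def LIP (α : ℝ) {d : ℕ} (η : Fin d → ℤ) : Set (Config d) :=
  {ω | ∃ F : (Fin d → ℤ) → ℤ, IsLipschitzFn F ∧
    ∀ x : Fin d → ℤ, ω (Fin.snoc x (F x)) = true ∧ planeHt α η x < F x}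

/-- `pc` is the critical probability `p_L(α,d,η)` of Lipschitz percolation above the tilted
plane `L^{α,d}_η`: `pc ∈ (0,1)`, for `p` below it there is `P_p`-a.s. no open Lipschitz
surface above the plane, and for `p` above it there `P_p`-a.s. is one.
(Here `P p` is the Bernoulli(`p`) product measure on `{0,1}^{ℤ^{d+1}}`.) -/
def IsCriticalProb {d : ℕ} (P : ℝ → Measure (Config d)) (α : ℝ) (η : Fin d → ℤ)
    (pc : ℝ) : Prop :=
  pc ∈ Set.Ioo (0 : ℝ) 1 ∧
    (∀ p, 0 ≤ p → p < pc → P p (LIP α η) = 0) ∧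
    (∀ p, pc < p → p ≤ 1 → P p (LIP α η) = 1)

/-- The canonical direction vector `η ∈ {-1,0,1}^d` with `k` entries equal to `1`; the
critical probability `p_L(α,d,η)` depends on `η` only through `k = ‖η‖₁`, and
`p_L(α,d,k)` denotes the common value. -/
def etaK (d k : ℕ) : Fin d → ℤ := fun i => if (i : ℕ) < k then 1 else 0

/-- Height of the inverted pyramid `∇^{α,d}_η` above `x ∈ ℤ^d`:
the maximum of `⌊α ∑ᵢ η'ᵢ xᵢ⌋` over all `η' ∈ {-1,0,1}^d` with `‖η'‖₁ = ‖η‖₁`. -/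
noncomputable def pyrHt (α : ℝ) {d : ℕ} (η x : Fin d → ℤ) : ℤ :=
  sSup {h : ℤ | ∃ η' : Fin d → ℤ, IsSign η' ∧ (∑ i, |η' i|) = (∑ i, |η i|) ∧
    h = planeHt α η' x}

/-- The event `LIP(∇^{α,d}_η)` that there is an open Lipschitz surface lying (strictly)
above the inverted pyramid `∇^{α,d}_η`. -/
def LIPpyr (α : ℝ) {d : ℕ} (η : Fin d → ℤ) : Set (Config d) :=
  {ω | ∃ F : (Fin d → ℤ) → ℤ, IsLipschitzFn F ∧
    ∀ x : Fin d → ℤ, ω (Fin.snoc x (F x)) = true ∧ pyrHt α η x < F x}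

section Bernoulli

variable {ι : Type*} {p : ℝ}

/-- The event that a configuration agrees with `f` on the finite set `s`. -/
def agreeOn (s : Finset ι) (f : ι → Bool) : Set (ι → Bool) := {ω | ∀ x ∈ s, ω x = f x}

lemma agreeOn_eq_pi (s : Finset ι) (f : ι → Bool) :
    agreeOn s f = Set.pi s fun x => {f x} := by
  ext ω
  simp [agreeOn, Set.mem_pi]

lemma measurableSet_agreeOn (s : Finset ι) (f : ι → Bool) : MeasurableSet (agreeOn s f) := by
  rw [agreeOn_eq_pi]
  exact MeasurableSet.pi s.countable_toSet fun x _ => measurableSet_singleton _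

lemma isPiSystem_agreeOn :
    IsPiSystem (Set.range fun q : Finset ι × (ι → Bool) => agreeOn q.1 q.2) := by
  classical
  rintro _ ⟨⟨s, f⟩, rfl⟩ _ ⟨⟨t, g⟩, rfl⟩ ⟨ω, hω₁, hω₂⟩
  refine ⟨⟨s ∪ t, ω⟩, ?_⟩
  simp only [agreeOn, Set.mem_ofPred_eq] at hω₁ hω₂
  ext ω'
  simp only [agreeOn, Set.mem_ofPred_eq, Set.mem_inter_iff, Finset.mem_union]
  refine ⟨fun h => ⟨fun x hx => (h x (Or.inl hx)).trans (hω₁ x hx),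
    fun x hx => (h x (Or.inr hx)).trans (hω₂ x hx)⟩, ?_⟩
  rintro ⟨h₁, h₂⟩ x (hx | hx)
  · exact (h₁ x hx).trans (hω₁ x hx).symm
  · exact (h₂ x hx).trans (hω₂ x hx).symm

lemma generateFrom_agreeOn :
    (MeasurableSpace.pi : MeasurableSpace (ι → Bool)) =
      MeasurableSpace.generateFrom
        (Set.range fun q : Finset ι × (ι → Bool) => agreeOn q.1 q.2) := by
  apply le_antisymm
  · refine iSup_le fun x => ?_
    rw [← measurable_iff_comap_le]
    refine @measurable_to_countable' _ _ _ _ (_) _ fun b => ?_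
    refine MeasurableSpace.measurableSet_generateFrom ⟨⟨{x}, fun _ => b⟩, ?_⟩
    ext ω
    simp [agreeOn]
  · refine MeasurableSpace.generateFrom_le ?_
    rintro _ ⟨q, rfl⟩
    exact measurableSet_agreeOn _ _

lemma IsBernoulli.unique {P Q : Measure (ι → Bool)} (hP : IsBernoulli p P)
    (hQ : IsBernoulli p Q) : P = Q := by
  have := hP.1
  have := hQ.1
  refine ext_of_generate_finite _ generateFrom_agreeOn isPiSystem_agreeOn ?_ (by simp)
  rintro _ ⟨q, rfl⟩
  exact (hP.2 _ _).trans (hQ.2 _ _).symm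

lemma IsBernoulli.iIndepFun_eval {P : Measure (ι → Bool)} (hP : IsBernoulli p P) :
    ProbabilityTheory.iIndepFun (fun (x : ι) (ω : ι → Bool) => ω x) P := by
  have := hP.1
  have hpm (x : ι) : IsProbabilityMeasure (P.map fun ω => ω x) :=
    Measure.isProbabilityMeasure_map (measurable_pi_apply x).aemeasurable
  rw [ProbabilityTheory.iIndepFun_iff_map_fun_eq_infinitePi_map (by fun_prop), Measure.map_id']
  refine hP.unique ⟨inferInstance, fun s f => ?_⟩
  have h := agreeOn_eq_pi s f
  rw [agreeOn] at h
  rw [h, Measure.infinitePi_pi _ fun _ _ => measurableSet_singleton _]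
  refine Finset.prod_congr rfl fun x _ => ?_
  rw [Measure.map_apply (measurable_pi_apply x) (measurableSet_singleton _)]
  have h₁ := hP.2 {x} f
  simp only [Finset.mem_singleton, forall_eq, Finset.prod_singleton] at h₁
  exact h₁

lemma IsBernoulli.map_equiv {P : Measure (ι → Bool)} (hP : IsBernoulli p P) (e : ι ≃ ι) :
    P.map (fun ω => ω ∘ e) = P := by
  have := hP.1
  have hm : Measurable fun ω : ι → Bool => ω ∘ e := by
    exact measurable_pi_lambda _ fun x => measurable_pi_apply (e x)
  refine IsBernoulli.unique (p := p)
    ⟨Measure.isProbabilityMeasure_map hm.aemeasurable, fun s f => ?_⟩ hP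
  have hmeas := measurableSet_agreeOn s f
  rw [agreeOn] at hmeas
  rw [Measure.map_apply hm hmeas]
  have h := hP.2 (s.map e.toEmbedding) (f ∘ e.symm)
  simp only [Finset.prod_map, Finset.mem_map, Equiv.coe_toEmbedding, forall_exists_index, and_imp,
    forall_apply_eq_imp_iff₂, Function.comp_apply, Equiv.symm_apply_apply] at h
  exact h

lemma IsBernoulli.measure_preimage_equiv {P : Measure (ι → Bool)} (hP : IsBernoulli p P)
    (e : ι ≃ ι) {A : Set (ι → Bool)} (hA : MeasurableSet A) :
    P ((fun ω => ω ∘ e) ⁻¹' A) = P A := by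
  have hm : Measurable fun ω : ι → Bool => ω ∘ e := by
    exact measurable_pi_lambda _ fun x => measurable_pi_apply (e x)
  rw [← Measure.map_apply hm hA, hP.map_equiv]

/-- A measurable event which is insensitive to finitely many changes is trivial. -/
lemma IsBernoulli.zero_or_one {P : Measure (ι → Bool)} (hP : IsBernoulli p P)
    {A : Set (ι → Bool)} (hA : MeasurableSet A)
    (htail : ∀ S : Set ι, S.Finite → ∀ ω ω' : ι → Bool, (∀ x ∉ S, ω x = ω' x) →
      ω ∈ A → ω' ∈ A) :
    P A = 0 ∨ P A = 1 := by
  classical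
  refine ProbabilityTheory.measure_zero_or_one_of_measurableSet_limsup
    (s := fun x : ι => MeasurableSpace.comap (fun ω : ι → Bool => ω x) inferInstance)
    (f := cofinite) (p := Set.Finite) (ns := fun s : Finset ι => (s : Set ι))
    (fun x => (measurable_pi_apply x).comap_le) hP.iIndepFun_eval
    (fun t ht => by simpa using ht) ?_ (fun s => s.finite_toSet)
    (fun x => ⟨{x}, by simp⟩) ?_
  · intro s t
    exact ⟨s ∪ t, by simp, by simp⟩
  · rw [limsup_eq_iInf_iSup]
    simp only [MeasurableSpace.measurableSet_iInf]
    intro T hT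
    let φ : (ι → Bool) → ι → Bool := fun ω x => if x ∈ T then ω x else true
    have hφ : Measurable[⨆ x ∈ T,
        MeasurableSpace.comap (fun ω : ι → Bool => ω x) inferInstance] φ := by
      refine @measurable_pi_lambda _ _ _ (_) _ _ fun x => ?_
      by_cases hx : x ∈ T
      · simp only [φ, hx, if_true]
        rw [measurable_iff_comap_le]
        exact le_iSup₂_of_le x hx le_rfl
      · simp only [φ, hx, if_false]
        exact measurable_const
    have hpre : φ ⁻¹' A = A := by
      ext ω
      have hT' : Tᶜ.Finite := hT
      refine ⟨htail Tᶜ hT' (φ ω) ω ?_, htail Tᶜ hT' ω (φ ω) ?_⟩ <;>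
      · intro x hx
        simp [φ, Set.notMem_compl_iff.1 hx]
    rw [← hpre]
    exact hφ hA

lemma measurable_threshold (p : ℝ) :
    Measurable fun (u : ι → ℝ) (x : ι) => decide (u x ≤ p) := by
  refine measurable_pi_lambda _ fun x => ?_
  refine measurable_to_bool ?_
  have : (fun u : ι → ℝ => decide (u x ≤ p)) ⁻¹' {true} = (fun u => u x) ⁻¹' Set.Iic p := by
    ext u
    simp
  rw [this]
  exact measurable_pi_apply x measurableSet_Iic

/-- Thresholding i.i.d. uniform variables at level `p` yields the Bernoulli measure. -/
lemma isBernoulli_threshold (hp : p ∈ Set.Icc (0 : ℝ) 1)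
    [IsProbabilityMeasure (volume.restrict (Set.Icc (0 : ℝ) 1))] :
    IsBernoulli p ((Measure.infinitePi fun _ : ι => volume.restrict (Set.Icc (0 : ℝ) 1)).map
      fun u x => decide (u x ≤ p)) := by
  refine ⟨Measure.isProbabilityMeasure_map (measurable_threshold p).aemeasurable, fun s f => ?_⟩
  have hmeas := measurableSet_agreeOn s f
  rw [agreeOn] at hmeas
  rw [Measure.map_apply (measurable_threshold p) hmeas]
  have h : (fun (u : ι → ℝ) (x : ι) => decide (u x ≤ p)) ⁻¹' {ω | ∀ x ∈ s, ω x = f x} =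
      Set.pi s fun x => if f x then Set.Iic p else Set.Ioi p := by
    ext u
    simp only [Set.mem_preimage, Set.mem_ofPred_eq, Set.mem_pi, Finset.mem_coe]
    refine forall₂_congr fun x _ => ?_
    cases f x <;> simp
  rw [h, Measure.infinitePi_pi _ fun x _ => by
    split_ifs
    exacts [measurableSet_Iic, measurableSet_Ioi]]
  refine Finset.prod_congr rfl fun x _ => ?_
  split_ifs
  · rw [Measure.restrict_apply measurableSet_Iic, Set.inter_comm]
    have : Set.Icc (0 : ℝ) 1 ∩ Set.Iic p = Set.Icc 0 p := by
      ext u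
      simp only [Set.mem_inter_iff, Set.mem_Icc, Set.mem_Iic]
      exact ⟨fun h => ⟨h.1.1, h.2⟩, fun h => ⟨⟨h.1, h.2.trans hp.2⟩, h.2⟩⟩
    rw [this, Real.volume_Icc, sub_zero]
  · rw [Measure.restrict_apply measurableSet_Ioi, Set.inter_comm]
    have : Set.Icc (0 : ℝ) 1 ∩ Set.Ioi p = Set.Ioc p 1 := by
      ext u
      simp only [Set.mem_inter_iff, Set.mem_Icc, Set.mem_Ioi, Set.mem_Ioc]
      exact ⟨fun h => ⟨h.2, h.1.2⟩, fun h => ⟨⟨hp.1.trans h.1.le, h.2⟩, h.1⟩⟩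
    rw [this, Real.volume_Ioc]

/-- The probability of an increasing event is nondecreasing in `p`. -/
lemma IsBernoulli.mono {p' : ℝ} {P Q : Measure (ι → Bool)} (hP : IsBernoulli p P)
    (hQ : IsBernoulli p' Q) (hp : 0 ≤ p) (hpp' : p ≤ p') (hp' : p' ≤ 1)
    {A : Set (ι → Bool)} (hA : MeasurableSet A)
    (hinc : ∀ ω ω' : ι → Bool, (∀ x, ω x = true → ω' x = true) → ω ∈ A → ω' ∈ A) :
    P A ≤ Q A := by
  have : IsProbabilityMeasure (volume.restrict (Set.Icc (0 : ℝ) 1)) := ⟨by simp⟩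
  rw [hP.unique (isBernoulli_threshold ⟨hp, hpp'.trans hp'⟩),
    hQ.unique (isBernoulli_threshold ⟨hp.trans hpp', hp'⟩),
    Measure.map_apply (measurable_threshold p) hA, Measure.map_apply (measurable_threshold p') hA]
  refine measure_mono fun u hu => hinc _ _ (fun x hx => ?_) hu
  simp only [decide_eq_true_eq] at hx ⊢
  exact hx.trans hpp'

lemma IsBernoulli.measure_forall_eq {P : Measure (ι → Bool)} (hP : IsBernoulli p P)
    (s : Finset ι) (b : Bool) :
    P {ω | ∀ x ∈ s, ω x = b} =
      (if b then ENNReal.ofReal p else ENNReal.ofReal (1 - p)) ^ s.card := by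
  rw [hP.2 s fun _ => b, Finset.prod_const]

end Bernoulli

section Reachability

variable {d : ℕ}

/-- The event that there is an open Lipschitz surface strictly above the graph of `g`. -/
def lipAbove (g : (Fin d → ℤ) → ℤ) : Set (Config d) :=
  {ω | ∃ F : (Fin d → ℤ) → ℤ, IsLipschitzFn F ∧
    ∀ x : Fin d → ℤ, ω (Fin.snoc x (F x)) = true ∧ g x < F x}

/-- Unit vectors of `ℤ^d`. -/
abbrev UnitStep (d : ℕ) := {v : Fin d → ℤ // ∑ i, |v i| = 1}

instance UnitStep.finite (d : ℕ) : Finite (UnitStep d) := by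
  refine Set.Finite.subset (Set.finite_Icc (fun _ : Fin d => (-1 : ℤ)) fun _ => 1) fun v hv => ?_
  have h (i : Fin d) : |v i| ≤ 1 :=
    (Finset.single_le_sum (fun j _ => abs_nonneg (v j)) (Finset.mem_univ i)).trans_eq hv
  exact ⟨fun i => (abs_le.1 (h i)).1, fun i => (abs_le.1 (h i)).2⟩

/-- `ReachIn g ω n x h`: the site `(x, h)` can be reached in `n` steps from a site not above the
graph of `g`, where a step either moves up onto a closed site or diagonally down. -/
def ReachIn (g : (Fin d → ℤ) → ℤ) (ω : Config d) : ℕ → (Fin d → ℤ) → ℤ → Prop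
  | 0, x, h => h ≤ g x
  | n + 1, x, h => (ReachIn g ω n x (h - 1) ∧ ω (Fin.snoc x h) = false) ∨
      ∃ v : UnitStep d, ReachIn g ω n (x - v) (h + 1)

lemma measurableSet_reachIn (g : (Fin d → ℤ) → ℤ) (n : ℕ) (x : Fin d → ℤ) (h : ℤ) :
    MeasurableSet {ω : Config d | ReachIn g ω n x h} := by
  induction n generalizing x h with
  | zero => exact MeasurableSet.const _
  | succ n ih =>
    have hcl : MeasurableSet {ω : Config d | ω (Fin.snoc x h) = false} :=
      measurable_pi_apply (X := fun _ : Site d => Bool) (Fin.snoc x h)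
        (measurableSet_singleton false)
    have heq : {ω : Config d | ReachIn g ω (n + 1) x h} =
        {ω | ReachIn g ω n x (h - 1)} ∩ {ω | ω (Fin.snoc x h) = false} ∪
          ⋃ v : UnitStep d, {ω | ReachIn g ω n (x - v) (h + 1)} := by
      ext ω
      simp [ReachIn]
    rw [heq]
    exact ((ih x (h - 1)).inter hcl).union (MeasurableSet.iUnion fun v => ih _ _)

/-- An open Lipschitz surface above `g` exists iff the reachable heights over each point are
bounded above. -/
lemma mem_lipAbove_iff (g : (Fin d → ℤ) → ℤ) (ω : Config d) :
    ω ∈ lipAbove g ↔ ∀ x, ∃ M : ℤ, ∀ h, (∃ n, ReachIn g ω n x h) → h ≤ M := by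
  constructor
  · rintro ⟨F, hF, hω⟩ x
    have key (n : ℕ) : ∀ x h, ReachIn g ω n x h → h < F x := by
      induction n with
      | zero => exact fun x h hh => lt_of_le_of_lt hh (hω x).2
      | succ n ih =>
        rintro x h (⟨h₁, h₂⟩ | ⟨v, hv⟩)
        · have h₃ := ih _ _ h₁
          have h₄ : h ≠ F x := by
            rintro rfl
            simp [(hω x).1] at h₂
          omega
        · have h₁ := ih _ _ hv
          have h₂ := hF (x - v) x (by simpa using v.2)
          rw [abs_le] at h₂
          omega
    exact ⟨F x, fun h ⟨n, hn⟩ => (key n x h hn).le⟩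
  · intro hb
    have hmax (x : Fin d → ℤ) := Int.exists_greatest_of_bdd (hb x) ⟨g x, 0, le_rfl⟩
    choose G hG hGmax using hmax
    have hstep (x y : Fin d → ℤ) (hxy : ∑ i, |x i - y i| = 1) : G x - 1 ≤ G y := by
      obtain ⟨n, hn⟩ := hG x
      refine hGmax y _ ⟨n + 1, Or.inr ⟨⟨y - x, ?_⟩, ?_⟩⟩
      · simpa [abs_sub_comm] using hxy
      · simpa using hn
    refine ⟨fun x => G x + 1, fun x y hxy => ?_, fun x => ⟨?_, ?_⟩⟩
    · have h₁ := hstep x y hxy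
      have h₂ := hstep y x (by simpa [abs_sub_comm] using hxy)
      rw [abs_le]
      constructor <;> linarith
    · obtain ⟨n, hn⟩ := hG x
      by_contra hcl
      have := hGmax x (G x + 1) ⟨n + 1, Or.inl ⟨by simpa using hn, by simpa using hcl⟩⟩
      omega
    · have := hGmax x (g x) ⟨0, le_rfl⟩
      exact Int.lt_add_one_iff.2 this

lemma measurableSet_lipAbove (g : (Fin d → ℤ) → ℤ) : MeasurableSet (lipAbove g) := by
  have : lipAbove g =
      ⋂ x, ⋃ M : ℤ, ⋂ h : ℤ, ⋂ n : ℕ, {ω : Config d | ReachIn g ω n x h → h ≤ M} := by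
    ext ω
    simp [mem_lipAbove_iff]
  rw [this]
  exact MeasurableSet.iInter fun x => MeasurableSet.iUnion fun M => MeasurableSet.iInter fun h =>
    MeasurableSet.iInter fun n => (measurableSet_reachIn g n x h).imp (MeasurableSet.const _)

lemma lipAbove_mono {g g' : (Fin d → ℤ) → ℤ} (h : ∀ x, g x ≤ g' x) :
    lipAbove g' ⊆ lipAbove g :=
  fun _ ⟨F, hF, hω⟩ => ⟨F, hF, fun x => ⟨(hω x).1, (h x).trans_lt (hω x).2⟩⟩

lemma lipAbove_increasing (g : (Fin d → ℤ) → ℤ) (ω ω' : Config d)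
    (h : ∀ x, ω x = true → ω' x = true) : ω ∈ lipAbove g → ω' ∈ lipAbove g :=
  fun ⟨F, hF, hω⟩ => ⟨F, hF, fun x => ⟨h _ (hω x).1, (hω x).2⟩⟩

/-- The product of a bijection of `ℤ^d` with a bijection of `ℤ`, acting on `ℤ^{d+1}`. -/
def siteEquiv (T : (Fin d → ℤ) ≃ (Fin d → ℤ)) (S : ℤ ≃ ℤ) : Site d ≃ Site d where
  toFun z := Fin.snoc (T (z ∘ Fin.castSucc)) (S (z (Fin.last d)))
  invFun z := Fin.snoc (T.symm (z ∘ Fin.castSucc)) (S.symm (z (Fin.last d)))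
  left_inv z := by
    ext i
    refine Fin.lastCases ?_ (fun i => ?_) i <;> simp
  right_inv z := by
    ext i
    refine Fin.lastCases ?_ (fun i => ?_) i <;> simp

lemma siteEquiv_snoc (T : (Fin d → ℤ) ≃ (Fin d → ℤ)) (S : ℤ ≃ ℤ) (x : Fin d → ℤ) (h : ℤ) :
    siteEquiv T S (Fin.snoc x h) = Fin.snoc (T x) (S h) := by
  simp [siteEquiv]

lemma IsBernoulli.measure_lipAbove_add {p : ℝ} {P : Measure (Config d)} (hP : IsBernoulli p P)
    (g : (Fin d → ℤ) → ℤ) (m : ℤ) : P (lipAbove fun x => g x + m) = P (lipAbove g) := by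
  rw [← hP.measure_preimage_equiv (siteEquiv (Equiv.refl _) (Equiv.addRight m))
    (measurableSet_lipAbove g)]
  congr 1
  ext ω
  constructor
  · rintro ⟨F, hF, hω⟩
    refine ⟨fun x => F x - m, fun x y hxy => by simpa using hF x y hxy, fun x => ⟨?_, ?_⟩⟩
    · simpa [siteEquiv_snoc] using (hω x).1
    · have := (hω x).2
      dsimp only at this ⊢
      omega
  · rintro ⟨F, hF, hω⟩
    refine ⟨fun x => F x + m, fun x y hxy => by simpa using hF x y hxy, fun x => ⟨?_, ?_⟩⟩
    · simpa [siteEquiv_snoc] using (hω x).1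
    · have := (hω x).2
      dsimp only at this ⊢
      omega

/-- Zero-one law for the existence of an open Lipschitz surface above `g`. -/
lemma IsBernoulli.lipAbove_zero_or_one {p : ℝ} {P : Measure (Config d)} (hP : IsBernoulli p P)
    (g : (Fin d → ℤ) → ℤ) : P (lipAbove g) = 0 ∨ P (lipAbove g) = 1 := by
  have := hP.1
  set A : ℕ → Set (Config d) := fun m => lipAbove fun x => g x + m
  have hAm (m : ℕ) : MeasurableSet (A m) := measurableSet_lipAbove _
  have hanti : Antitone A := fun m n hmn => lipAbove_mono fun x => by
    have : (m : ℤ) ≤ n := by exact_mod_cast hmn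
    omega
  have hlim := tendsto_measure_iInter_atTop (μ := P) (fun m => (hAm m).nullMeasurableSet) hanti
    ⟨0, measure_ne_top _ _⟩
  have hconst : P ∘ A = fun _ => P (lipAbove g) :=
    funext fun m => hP.measure_lipAbove_add g m
  rw [hconst] at hlim
  have heq := tendsto_nhds_unique tendsto_const_nhds hlim
  rw [heq]
  refine hP.zero_or_one (MeasurableSet.iInter hAm) fun S hS ω ω' hωω' hω => ?_
  obtain ⟨B, hB⟩ := (hS.image fun z : Site d => z (Fin.last d) - g (z ∘ Fin.castSucc)).bddAbove
  rw [Set.mem_iInter] at hω ⊢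
  intro m
  refine hanti (le_max_left m B.toNat) ?_
  obtain ⟨F, hF, h⟩ := hω (max m B.toNat)
  refine ⟨F, hF, fun x => ⟨?_, (h x).2⟩⟩
  rw [← hωω', (h x).1]
  intro hmem
  have h₁ := hB ⟨_, hmem, rfl⟩
  have h₂ := (h x).2
  simp only [Fin.snoc_last, Fin.snoc_comp_castSucc] at h₁
  have h₃ : B.toNat ≤ max m B.toNat := le_max_right _ _
  dsimp only at h₂
  omega

end Reachability

section Peierls

variable {d : ℕ} {α : ℝ} {η : Fin d → ℤ}

/-- The sites onto which a path arriving at `(x, h)` moves up. The path is described backwards by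
its list of steps, `none` being a step up and `some v` a step in direction `(v, -1)`. -/
def closedSites : (Fin d → ℤ) → ℤ → List (Option (UnitStep d)) → List (Site d)
  | _, _, [] => []
  | x, h, none :: w => Fin.snoc x h :: closedSites x (h - 1) w
  | x, h, some v :: w => closedSites (x - v) (h + 1) w

lemma length_closedSites_le (x : Fin d → ℤ) (h : ℤ) (w : List (Option (UnitStep d))) :
    (closedSites x h w).length ≤ w.length := by
  induction w generalizing x h with
  | nil => simp [closedSites]
  | cons a w ih =>
    cases a with
    | none => simpa [closedSites] using ih x (h - 1)
    | some v => simpa [closedSites] using (ih (x - v) (h + 1)).trans (Nat.le_succ _)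

lemma neg_one_le_sum_mul_unitStep (hη : IsSign η) (v : UnitStep d) :
    (-1 : ℝ) ≤ ∑ i, (η i : ℝ) * ((v : Fin d → ℤ) i : ℝ) := by
  obtain ⟨v, hv⟩ := v
  have h : (-1 : ℤ) ≤ ∑ i, η i * v i := by
    rw [← hv, ← Finset.sum_neg_distrib]
    refine Finset.sum_le_sum fun i _ => ?_
    rcases hη i with h | h | h <;> rw [h]
    · linarith [le_abs_self (v i)]
    · simp
    · linarith [neg_abs_le (v i)]
  exact_mod_cast h

/-- A shortest path to `(x, h)` moves up onto distinct closed sites, and sufficiently often. -/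
lemma exists_shortest_path (hα : 0 ≤ α) (hη : IsSign η) {ω : Config d} (n : ℕ) :
    ∀ (x : Fin d → ℤ) (h : ℤ), ReachIn (planeHt α η) ω n x h →
      (∀ m < n, ¬ ReachIn (planeHt α η) ω m x h) →
      ∃ w : List (Option (UnitStep d)), w.length = n ∧
        (∀ s ∈ closedSites x h w, ω s = false) ∧ (closedSites x h w).Nodup ∧
        (∀ y k, (Fin.snoc y k : Site d) ∈ closedSites x h w →
          ∃ m ≤ n, ReachIn (planeHt α η) ω m y k) ∧
        (h : ℝ) - α * ∑ i, (η i : ℝ) * (x i : ℝ) ≤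
          (closedSites x h w).length - (1 - α) * (n - (closedSites x h w).length) := by
  induction n with
  | zero =>
    intro x h hr _
    refine ⟨[], rfl, by simp [closedSites], by simp [closedSites], by simp [closedSites], ?_⟩
    have := Int.le_floor.1 (show h ≤ ⌊α * ∑ i, (η i : ℝ) * (x i : ℝ)⌋ from hr)
    simp only [closedSites, List.length_nil, Nat.cast_zero]
    linarith
  | succ n ih =>
    rintro x h (⟨hr, hcl⟩ | ⟨v, hr⟩) hmin
    · obtain ⟨w, hlen, hclosed, hnodup, hlevel, hcount⟩ := ih x (h - 1) hr fun m hm hr' =>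
        hmin (m + 1) (by omega) (Or.inl ⟨hr', hcl⟩)
      refine ⟨none :: w, by simp [hlen], ?_, ?_, ?_, ?_⟩
      · simpa [closedSites, hcl] using hclosed
      · refine List.nodup_cons.2 ⟨fun hmem => ?_, hnodup⟩
        obtain ⟨m, hm, hr'⟩ := hlevel _ _ hmem
        exact hmin m (by omega) hr'
      · intro y k hyk
        simp only [closedSites, List.mem_cons, Fin.snoc_inj] at hyk
        rcases hyk with ⟨rfl, rfl⟩ | hyk
        · exact ⟨n + 1, le_rfl, Or.inl ⟨hr, hcl⟩⟩
        · obtain ⟨m, hm, hr'⟩ := hlevel _ _ hyk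
          exact ⟨m, by omega, hr'⟩
      · simp only [closedSites, List.length_cons]
        push_cast at hcount ⊢
        linarith
    · obtain ⟨w, hlen, hclosed, hnodup, hlevel, hcount⟩ := ih _ _ hr fun m hm hr' =>
        hmin (m + 1) (by omega) (Or.inr ⟨v, hr'⟩)
      refine ⟨some v :: w, by simp [hlen], hclosed, hnodup, fun y k hyk => ?_, ?_⟩
      · obtain ⟨m, hm, hr'⟩ := hlevel _ _ hyk
        exact ⟨m, by omega, hr'⟩
      · simp only [closedSites]
        have hv := mul_le_mul_of_nonneg_left (neg_one_le_sum_mul_unitStep hη v) hα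
        simp only [Pi.sub_apply, Int.cast_sub, mul_sub, Finset.sum_sub_distrib] at hcount
        push_cast at hcount ⊢
        linarith

/-- The event that all up-steps of the path `w` to `(x, h)` are onto distinct closed sites, at least
a fraction `1 / N` of the steps going up. -/
def pathEvent (N : ℕ) (x : Fin d → ℤ) (h : ℤ) (w : List (Option (UnitStep d))) :
    Set (Config d) :=
  {ω | (∀ s ∈ closedSites x h w, ω s = false) ∧ (closedSites x h w).Nodup ∧
    w.length ≤ N * (closedSites x h w).length}

lemma IsBernoulli.measure_pathEvent_le {p : ℝ} {P : Measure (Config d)} (hP : IsBernoulli p P)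
    {N : ℕ} {t : ℝ} (ht : 0 ≤ t) (ht1 : t ≤ 1) (hp : 1 - p = t ^ N) (x : Fin d → ℤ) (h : ℤ)
    (w : List (Option (UnitStep d))) :
    P (pathEvent N x h w) ≤ ENNReal.ofReal t ^ w.length := by
  classical
  by_cases hw : (closedSites x h w).Nodup ∧ w.length ≤ N * (closedSites x h w).length
  · have hsub : pathEvent N x h w ⊆ {ω | ∀ s ∈ (closedSites x h w).toFinset, ω s = false} :=
      fun ω hω s hs => hω.1 s (List.mem_toFinset.1 hs)
    refine (measure_mono hsub).trans ?_
    rw [hP.measure_forall_eq, List.toFinset_card_of_nodup hw.1, hp,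
      ENNReal.ofReal_pow ht, if_neg Bool.false_ne_true, ← pow_mul]
    exact pow_le_pow_right_of_le_one' (by simpa using ht1) hw.2
  · have : pathEvent N x h w = ∅ := Set.eq_empty_iff_forall_notMem.2 fun ω hω => hw hω.2
    simp [this]

lemma reach_subset_iUnion_pathEvent (hα : α ∈ Set.Ico (0 : ℝ) 1) (hη : IsSign η) {N : ℕ}
    (hN : 2 - α ≤ N * (1 - α)) (x : Fin d → ℤ) (j : ℕ) {h : ℤ}
    (hh : (j : ℝ) ≤ h - α * ∑ i, (η i : ℝ) * (x i : ℝ)) :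
    {ω : Config d | ∃ n, ReachIn (planeHt α η) ω n x h} ⊆
      ⋃ k : ℕ, ⋃ w : List.Vector (Option (UnitStep d)) (j + k), pathEvent N x h w.1 := by
  classical
  intro ω hω
  obtain ⟨w, hlen, hclosed, hnodup, -, hcount⟩ := exists_shortest_path hα.1 hη _ x h
    (Nat.find_spec hω) fun m hm => Nat.find_min hω hm
  set n := Nat.find hω
  set U := (closedSites x h w).length
  have hUn : U ≤ n := hlen ▸ length_closedSites_le x h w
  have hUn' : (U : ℝ) ≤ n := by exact_mod_cast hUn
  have hα1 : 0 < 1 - α := by linarith [hα.2]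
  have hjU : j ≤ U := by
    have : (j : ℝ) ≤ U := by nlinarith
    exact_mod_cast this
  have hnU : n ≤ N * U := by
    have h₁ : (1 - α) * n ≤ (2 - α) * U := by
      have : (0 : ℝ) ≤ j := j.cast_nonneg
      linarith
    have h₂ : (2 - α) * U ≤ N * (1 - α) * U := mul_le_mul_of_nonneg_right hN U.cast_nonneg
    have h₃ : (n : ℝ) ≤ N * U := le_of_mul_le_mul_left (by linarith) hα1
    exact_mod_cast h₃
  obtain ⟨k, hk⟩ := Nat.exists_eq_add_of_le (hjU.trans hUn)
  simp only [Set.mem_iUnion]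
  exact ⟨k, ⟨w, hlen.trans hk⟩, hclosed, hnodup, hlen.trans_le hnU⟩

/-- If the density of closed sites is small enough, there almost surely is an open Lipschitz surface
above the tilted plane. -/
lemma exists_lt_one_measure_lip_eq_one (hα : α ∈ Set.Ico (0 : ℝ) 1) (hη : IsSign η) :
    ∃ p ∈ Set.Ico (0 : ℝ) 1, ∀ P : Measure (Config d), IsBernoulli p P →
      P (lipAbove (planeHt α η)) = 1 := by
  classical
  have := Fintype.ofFinite (UnitStep d)
  have hα1 : 0 < 1 - α := by linarith [hα.2]
  obtain ⟨N, hN⟩ := exists_nat_ge ((2 - α) / (1 - α))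
  rw [div_le_iff₀ hα1] at hN
  set K : ℕ := Fintype.card (Option (UnitStep d)) with hK
  have hK1 : (1 : ℝ) ≤ K := by exact_mod_cast Fintype.card_pos
  set t : ℝ := (2 * K)⁻¹ with ht
  have ht0 : 0 < t := by positivity
  have ht1 : t ≤ 1 := inv_le_one_of_one_le₀ (by linarith)
  have hKt : K * t = 2⁻¹ := by
    rw [ht]
    field_simp
  refine ⟨1 - t ^ N, ⟨sub_nonneg.2 (pow_le_one₀ ht0.le ht1), by linarith [pow_pos ht0 N]⟩,
    fun P hP => ?_⟩
  have := hP.1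
  have hreach (x : Fin d → ℤ) (j : ℕ) {h : ℤ}
      (hh : (j : ℝ) ≤ h - α * ∑ i, (η i : ℝ) * (x i : ℝ)) :
      P {ω : Config d | ∃ n, ReachIn (planeHt α η) ω n x h} ≤ 2⁻¹ ^ j * 2 := by
    calc P {ω : Config d | ∃ n, ReachIn (planeHt α η) ω n x h}
        ≤ ∑' k : ℕ, ∑ w : List.Vector (Option (UnitStep d)) (j + k), P (pathEvent N x h w.1) := by
          refine (measure_mono (reach_subset_iUnion_pathEvent hα hη hN x j hh)).trans ?_
          refine (measure_iUnion_le _).trans (ENNReal.tsum_le_tsum fun k => ?_)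
          exact measure_iUnion_fintype_le _ _
      _ ≤ ∑' k : ℕ, (2⁻¹ : ℝ≥0∞) ^ j * 2⁻¹ ^ k := by
          refine ENNReal.tsum_le_tsum fun k => ?_
          refine (Finset.sum_le_sum fun w _ =>
            hP.measure_pathEvent_le ht0.le ht1 (by ring) x h w.1).trans_eq ?_
          have hw (w : List.Vector (Option (UnitStep d)) (j + k)) : w.1.length = j + k := w.2
          simp only [hw, Finset.sum_const, Finset.card_univ, card_vector, ← hK, nsmul_eq_mul]
          rw [← pow_add, Nat.cast_pow, ← mul_pow, ← ENNReal.ofReal_natCast K,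
            ← ENNReal.ofReal_mul K.cast_nonneg, hKt, ENNReal.ofReal_inv_of_pos two_pos,
            ENNReal.ofReal_ofNat]
      _ = 2⁻¹ ^ j * 2 := by
          rw [ENNReal.tsum_mul_left, ENNReal.tsum_geometric, ENNReal.one_sub_inv_two, inv_inv]
  have hae (x : Fin d → ℤ) :
      ∀ᵐ ω ∂P, ∃ M : ℤ, ∀ h, (∃ n, ReachIn (planeHt α η) ω n x h) → h ≤ M := by
    set c : ℤ := ⌈α * ∑ i, (η i : ℝ) * (x i : ℝ)⌉
    have hsum : ∑' j : ℕ, P {ω : Config d | ∃ n, ReachIn (planeHt α η) ω n x (c + j)} ≠ ∞ := by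
      refine ne_top_of_le_ne_top ?_ (ENNReal.tsum_le_tsum fun j => hreach x j ?_)
      · rw [ENNReal.tsum_mul_right, ENNReal.tsum_geometric, ENNReal.one_sub_inv_two, inv_inv]
        exact ENNReal.mul_ne_top ENNReal.ofNat_ne_top ENNReal.ofNat_ne_top
      · have := Int.le_ceil (α * ∑ i, (η i : ℝ) * (x i : ℝ))
        push_cast
        linarith
    filter_upwards [ae_eventually_notMem hsum] with ω hω
    obtain ⟨J, hJ⟩ := eventually_atTop.1 hω
    refine ⟨c + J, fun h hn => ?_⟩
    by_contra! hlt
    have hj : c + ((h - c).toNat : ℤ) = h := by omega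
    refine hJ (h - c).toNat (by omega) ?_
    rw [hj]
    exact hn
  refine (mem_ae_iff_prob_eq_one (measurableSet_lipAbove _)).1 ?_
  filter_upwards [ae_all_iff.2 hae] with ω hω using (mem_lipAbove_iff _ _).2 hω

end Peierls

section LowDensity

variable {d : ℕ}

/-- The sites visited by a path above the half-line `{x_i ≥ k, x_j = 0 for j ≠ i}`, starting at
height `h` and changing its height by `a - 1 ∈ {-1, 0, 1}` at each step `a`. -/
def raySites (i : Fin d) : ℕ → ℤ → List (Fin 3) → List (Site d)
  | _, _, [] => []
  | k, h, a :: w => Fin.snoc (Pi.single i (k : ℤ)) h :: raySites i (k + 1) (h + (a : ℕ) - 1) w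

lemma length_raySites (i : Fin d) (k : ℕ) (h : ℤ) (w : List (Fin 3)) :
    (raySites i k h w).length = w.length := by
  induction w generalizing k h with
  | nil => rfl
  | cons a w ih => simp [raySites, ih]

lemma le_apply_of_mem_raySites (i : Fin d) (k : ℕ) (h : ℤ) (w : List (Fin 3)) :
    ∀ s ∈ raySites i k h w, (k : ℤ) ≤ s i.castSucc := by
  induction w generalizing k h with
  | nil => simp [raySites]
  | cons a w ih =>
    intro s hs
    rcases List.mem_cons.1 hs with rfl | hs
    · simp
    · have := ih _ _ s hs
      push_cast at this
      omega

lemma nodup_raySites (i : Fin d) (k : ℕ) (h : ℤ) (w : List (Fin 3)) :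
    (raySites i k h w).Nodup := by
  induction w generalizing k h with
  | nil => simp [raySites]
  | cons a w ih =>
    refine List.nodup_cons.2 ⟨fun hmem => ?_, ih _ _⟩
    have := le_apply_of_mem_raySites i _ _ _ _ hmem
    simp at this

lemma exists_open_raySites {ω : Config d} {F : (Fin d → ℤ) → ℤ} (hF : IsLipschitzFn F)
    (hω : ∀ x, ω (Fin.snoc x (F x)) = true) (i : Fin d) (n k : ℕ) :
    ∃ w : List.Vector (Fin 3) n,
      ∀ s ∈ raySites i k (F (Pi.single i (k : ℤ))) w.1, ω s = true := by
  induction n generalizing k with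
  | zero => exact ⟨List.Vector.nil, by simp [raySites]⟩
  | succ n ih =>
    obtain ⟨w, hw⟩ := ih (k + 1)
    have hdist : ∑ j, |(Pi.single i ((k + 1 : ℕ) : ℤ) : Fin d → ℤ) j -
        (Pi.single i (k : ℤ) : Fin d → ℤ) j| = 1 := by
      rw [Finset.sum_eq_single i]
      · simp
      · intro j _ hj
        simp [hj]
      · simp
    have hab := abs_le.1 (hF _ _ hdist)
    set u := F (Pi.single i ((k + 1 : ℕ) : ℤ))
    set v := F (Pi.single i (k : ℤ))
    have hlt : (u - v + 1).toNat < 3 := by omega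
    refine ⟨⟨⟨(u - v + 1).toNat, hlt⟩ :: w.1, by simp [w.2]⟩, fun s hs => ?_⟩
    rcases List.mem_cons.1 hs with rfl | hs
    · exact hω _
    · refine hw s ?_
      have : v + ((u - v + 1).toNat : ℤ) - 1 = u := by omega
      rwa [this] at hs

/-- If the density of open sites is less than `1/3`, there is almost surely no open Lipschitz
surface. -/
lemma IsBernoulli.measure_lipAbove_eq_zero (hd : 1 ≤ d) {p : ℝ} {P : Measure (Config d)}
    (hP : IsBernoulli p P) (hp : p < 1 / 3) (g : (Fin d → ℤ) → ℤ) : P (lipAbove g) = 0 := by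
  classical
  let i : Fin d := ⟨0, hd⟩
  have hsub : lipAbove g ⊆ ⋃ h : ℤ, ⋂ n : ℕ, ⋃ w : List.Vector (Fin 3) n,
      {ω : Config d | ∀ s ∈ (raySites i 0 h w.1).toFinset, ω s = true} := by
    rintro ω ⟨F, hF, hω⟩
    simp only [Set.mem_iUnion, Set.mem_iInter]
    refine ⟨F (Pi.single i ((0 : ℕ) : ℤ)), fun n => ?_⟩
    obtain ⟨w, hw⟩ := exists_open_raySites hF (fun x => (hω x).1) i n 0
    exact ⟨w, fun s hs => hw s (List.mem_toFinset.1 hs)⟩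
  refine measure_mono_null hsub (measure_iUnion_null fun h => ?_)
  have hbound (n : ℕ) : P (⋂ n : ℕ, ⋃ w : List.Vector (Fin 3) n,
      {ω : Config d | ∀ s ∈ (raySites i 0 h w.1).toFinset, ω s = true}) ≤
        (3 * ENNReal.ofReal p) ^ n := by
    refine (measure_mono (Set.iInter_subset _ n)).trans ?_
    refine (measure_iUnion_fintype_le _ _).trans_eq ?_
    have hw (w : List.Vector (Fin 3) n) : w.1.length = n := w.2
    simp only [hP.measure_forall_eq, List.toFinset_card_of_nodup (nodup_raySites _ _ _ _),
      length_raySites, hw, if_true, Finset.sum_const, Finset.card_univ, card_vector,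
      Fintype.card_fin, nsmul_eq_mul]
    rw [Nat.cast_pow, ← mul_pow, Nat.cast_ofNat]
  have hlt : 3 * ENNReal.ofReal p < 1 := by
    rw [← ENNReal.ofReal_ofNat 3, ← ENNReal.ofReal_mul (by norm_num), ENNReal.ofReal_lt_one]
    linarith
  exact le_antisymm
    (ge_of_tendsto' (ENNReal.tendsto_pow_atTop_nhds_zero_of_lt_one hlt) hbound) zero_le

end LowDensity

section Symmetry

variable {d : ℕ} {α : ℝ} {η η' : Fin d → ℤ}

lemma IsSign.sum_abs_eq_card (hη : IsSign η) :
    ∑ i, |η i| = Fintype.card {i // η i ≠ 0} := by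
  classical
  rw [Fintype.card_subtype, Finset.card_filter, Nat.cast_sum]
  refine Finset.sum_congr rfl fun i _ => ?_
  rcases hη i with h | h | h <;> simp [h]

/-- Two sign vectors with the same number of nonzero entries agree up to a signed permutation. -/
lemma IsSign.exists_signed_perm (hη : IsSign η) (hη' : IsSign η')
    (h : ∑ i, |η' i| = ∑ i, |η i|) :
    ∃ (σ : Equiv.Perm (Fin d)) (s : Fin d → ℤˣ), ∀ i, η' i = s i * η (σ i) := by
  classical
  rw [hη'.sum_abs_eq_card, hη.sum_abs_eq_card, Nat.cast_inj] at h
  let e : {i // η' i ≠ 0} ≃ {i // η i ≠ 0} := Fintype.equivOfCardEq h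
  have hs (i : Fin d) : ∃ s : ℤˣ, η' i = s * η (e.extendSubtype i) := by
    by_cases hi : η' i ≠ 0
    · have hi' := e.extendSubtype_mem i hi
      by_cases heq : η' i = η (e.extendSubtype i)
      · exact ⟨1, by simpa using heq⟩
      · have h₁ := hη' i
        have h₂ := hη (e.extendSubtype i)
        refine ⟨-1, ?_⟩
        push_cast
        omega
    · have hi' := e.extendSubtype_not_mem i hi
      exact ⟨1, by rw [not_not.1 hi, not_not.1 hi', mul_zero]⟩
  choose s hs using hs
  exact ⟨e.extendSubtype, s, hs⟩

/-- The signed permutation of `ℤ^d` given by `σ` and `s`. -/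
def signedPerm (σ : Equiv.Perm (Fin d)) (s : Fin d → ℤˣ) : (Fin d → ℤ) ≃ (Fin d → ℤ) where
  toFun x j := s (σ.symm j) * x (σ.symm j)
  invFun y i := s i * y (σ i)
  left_inv x := by
    ext i
    simp [← mul_assoc, ← Units.val_mul]
  right_inv y := by
    ext j
    simp [← mul_assoc, ← Units.val_mul]

lemma planeHt_signedPerm {σ : Equiv.Perm (Fin d)} {s : Fin d → ℤˣ}
    (h : ∀ i, η' i = s i * η (σ i)) (x : Fin d → ℤ) :
    planeHt α η (signedPerm σ s x) = planeHt α η' x := by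
  unfold planeHt
  congr 2
  rw [← Equiv.sum_comp σ]
  refine Finset.sum_congr rfl fun i _ => ?_
  simp only [signedPerm, Equiv.coe_fn_mk, Equiv.symm_apply_apply, h]
  push_cast
  ring

lemma sum_abs_signedPerm (σ : Equiv.Perm (Fin d)) (s : Fin d → ℤˣ) (x y : Fin d → ℤ) :
    ∑ i, |signedPerm σ s x i - signedPerm σ s y i| = ∑ i, |x i - y i| := by
  rw [← Equiv.sum_comp σ]
  refine Finset.sum_congr rfl fun i _ => ?_
  simp only [signedPerm, Equiv.coe_fn_mk, Equiv.symm_apply_apply, ← mul_sub, abs_mul]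
  rcases Int.units_eq_one_or (s i) with h | h <;> simp [h]

lemma IsBernoulli.measure_lip_le_of_sum_abs_eq {p : ℝ} {P : Measure (Config d)}
    (hP : IsBernoulli p P) (hη : IsSign η) (hη' : IsSign η') (h : ∑ i, |η' i| = ∑ i, |η i|) :
    P (lipAbove (planeHt α η)) ≤ P (lipAbove (planeHt α η')) := by
  obtain ⟨σ, s, hs⟩ := hη.exists_signed_perm hη' h
  rw [← hP.measure_preimage_equiv (siteEquiv (signedPerm σ s).symm (Equiv.refl _))
    (measurableSet_lipAbove _)]
  refine measure_mono ?_
  rintro ω ⟨F, hF, hω⟩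
  refine ⟨fun x => F (signedPerm σ s x), fun x y hxy => hF _ _ ?_, fun x => ⟨?_, ?_⟩⟩
  · rw [sum_abs_signedPerm, hxy]
  · simpa [siteEquiv_snoc] using (hω (signedPerm σ s x)).1
  · simpa [planeHt_signedPerm hs] using (hω (signedPerm σ s x)).2

end Symmetry

section Pyramid

variable {d : ℕ} {α : ℝ} {η : Fin d → ℤ}

lemma IsLipschitzFn.finset_sup' {ι : Type*} {s : Finset ι} (hs : s.Nonempty)
    {F : ι → (Fin d → ℤ) → ℤ} (hF : ∀ i ∈ s, IsLipschitzFn (F i)) :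
    IsLipschitzFn fun x => s.sup' hs fun i => F i x := by
  have key (x y : Fin d → ℤ) (hxy : ∑ i, |x i - y i| = 1) :
      s.sup' hs (fun i => F i x) ≤ s.sup' hs (fun i => F i y) + 1 := by
    refine Finset.sup'_le hs _ fun i hi => ?_
    have h₁ := abs_le.1 (hF i hi x y hxy)
    have h₂ := Finset.le_sup' (fun i => F i y) hi
    omega
  intro x y hxy
  have h₁ := key x y hxy
  have h₂ := key y x (by simpa [abs_sub_comm] using hxy)
  dsimp only
  rw [abs_le]
  constructor <;> linarith

/-- Sign vectors with the same `ℓ¹`-norm as `η`. -/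
def signClass (η : Fin d → ℤ) : Set (Fin d → ℤ) :=
  {η' | IsSign η' ∧ ∑ i, |η' i| = ∑ i, |η i|}

lemma finite_signClass (η : Fin d → ℤ) : (signClass η).Finite := by
  refine (Set.finite_Icc (fun _ : Fin d => (-1 : ℤ)) fun _ => 1).subset fun η' h => ⟨?_, ?_⟩ <;>
  · intro i
    rcases h.1 i with h | h | h <;> simp [h]

lemma pyrHt_eq (η x : Fin d → ℤ) :
    pyrHt α η x = sSup ((fun η' => planeHt α η' x) '' signClass η) := by
  unfold pyrHt
  congr 1
  ext h
  simp [signClass, and_assoc, eq_comm]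

lemma lipPyr_eq_iInter (hη : IsSign η) :
    LIPpyr α η = ⋂ η' ∈ signClass η, lipAbove (planeHt α η') := by
  have hfin (x : Fin d → ℤ) : ((fun η' => planeHt α η' x) '' signClass η).Finite :=
    (finite_signClass η).image _
  refine Set.Subset.antisymm ?_ fun ω hω => ?_
  · rintro ω ⟨F, hF, hω⟩
    refine Set.mem_iInter₂.2 fun η' hη' => ⟨F, hF, fun x => ⟨(hω x).1, ?_⟩⟩
    refine lt_of_le_of_lt ?_ (hω x).2
    rw [pyrHt_eq]
    exact le_csSup (hfin x).bddAbove ⟨η', hη', rfl⟩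
  · have hne : (finite_signClass η).toFinset.Nonempty := ⟨η, by simpa using ⟨hη, rfl⟩⟩
    have hω' : ∀ η', ∃ F : (Fin d → ℤ) → ℤ, η' ∈ signClass η → IsLipschitzFn F ∧
        ∀ x : Fin d → ℤ, ω (Fin.snoc x (F x)) = true ∧ planeHt α η' x < F x := by
      intro η'
      by_cases h : η' ∈ signClass η
      · obtain ⟨F, hF⟩ := Set.mem_iInter₂.1 hω η' h
        exact ⟨F, fun _ => hF⟩
      · exact ⟨0, fun h' => absurd h' h⟩
    choose F hF using hω'
    refine ⟨_, IsLipschitzFn.finset_sup' hne (F := F) fun η' h =>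
      (hF η' ((finite_signClass η).mem_toFinset.1 h)).1, fun x => ⟨?_, ?_⟩⟩
    · obtain ⟨η', h, heq⟩ := Finset.exists_mem_eq_sup' hne fun η' => F η' x
      rw [heq]
      exact ((hF η' ((finite_signClass η).mem_toFinset.1 h)).2 x).1
    · have hmem : pyrHt α η x ∈ (fun η' => planeHt α η' x) '' signClass η := by
        rw [pyrHt_eq]
        exact Set.Nonempty.csSup_mem ⟨_, η, ⟨hη, rfl⟩, rfl⟩ (hfin x)
      obtain ⟨η', h, heq⟩ := hmem
      rw [← heq]
      exact ((hF η' h).2 x).2.trans_le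
        (Finset.le_sup' (fun η' => F η' x) ((finite_signClass η).mem_toFinset.2 h))

lemma measure_lipPyr_eq_zero {P : Measure (Config d)} (hη : IsSign η)
    (h : P (LIP α η) = 0) : P (LIPpyr α η) = 0 := by
  rw [lipPyr_eq_iInter hη]
  exact measure_mono_null (Set.biInter_subset_of_mem ⟨hη, rfl⟩) h

lemma IsBernoulli.measure_lipPyr_eq_one {p : ℝ} {P : Measure (Config d)}
    (hP : IsBernoulli p P) (hη : IsSign η) (h : P (LIP α η) = 1) : P (LIPpyr α η) = 1 := by
  have := hP.1
  have hm : MeasurableSet (⋂ η' ∈ signClass η, lipAbove (planeHt α η')) :=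
    MeasurableSet.biInter (finite_signClass η).countable fun _ _ => measurableSet_lipAbove _
  rw [lipPyr_eq_iInter hη, ← mem_ae_iff_prob_eq_one hm,
    countable_bInter_mem (finite_signClass η).countable]
  intro η' hη'
  rw [mem_ae_iff_prob_eq_one (measurableSet_lipAbove _)]
  exact le_antisymm prob_le_one (h.symm.le.trans (hP.measure_lip_le_of_sum_abs_eq hη hη'.1 hη'.2))

end Pyramid

/-- Lipschitz percolation above the tilted plane `L^{α,d}_η` and above
the inverted pyramid `∇^{α,d}_η` undergo a nontrivial phase transition at the same
critical probability `p_L(α,d,η) ∈ (0,1)`. -/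
theorem phase_transition_tilted_planes_and_pyramids
    {d : ℕ} (hd : 1 ≤ d) (α : ℝ) (hα : α ∈ Set.Ico (0 : ℝ) 1)
    (η : Fin d → ℤ) (hη : IsSign η)
    (P : ℝ → Measure (Config d)) (hP : ∀ p ∈ Set.Icc (0 : ℝ) 1, IsBernoulli p (P p)) :
    ∃ pc ∈ Set.Ioo (0 : ℝ) 1,
      (∀ p, 0 ≤ p → p < pc → P p (LIPpyr α η) = 0 ∧ P p (LIP α η) = 0) ∧
      (∀ p, pc < p → p ≤ 1 → P p (LIPpyr α η) = 1 ∧ P p (LIP α η) = 1) := by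
  have hlip : LIP α η = lipAbove (planeHt α η) := rfl
  have hmeas := measurableSet_lipAbove (planeHt α η)
  obtain ⟨p₁, hp₁, hone⟩ := exists_lt_one_measure_lip_eq_one hα hη
  let Z : Set ℝ := {p | p ∈ Set.Icc (0 : ℝ) 1 ∧ P p (LIP α η) = 0}
  have hle {p q : ℝ} (hp : 0 ≤ p) (hpq : p ≤ q) (hq : q ≤ 1) : P p (LIP α η) ≤ P q (LIP α η) :=
    (hP p ⟨hp, hpq.trans hq⟩).mono (hP q ⟨hp.trans hpq, hq⟩) hp hpq hq hmeas
      (lipAbove_increasing _)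
  have hquarter : (1 / 4 : ℝ) ∈ Z := by
    have h : (1 / 4 : ℝ) ∈ Set.Icc (0 : ℝ) 1 := by constructor <;> norm_num
    exact ⟨h, (hP _ h).measure_lipAbove_eq_zero hd (by norm_num) _⟩
  have hZ : p₁ ∈ upperBounds Z := by
    rintro p ⟨hp, hp0⟩
    by_contra! hlt
    have h₁ := hle hp₁.1 hlt.le hp.2
    rw [hp0, hlip, hone _ (hP p₁ ⟨hp₁.1, hp₁.2.le⟩)] at h₁
    simp at h₁
  have hpos : 0 < sSup Z := lt_of_lt_of_le (by norm_num) (le_csSup ⟨p₁, hZ⟩ hquarter)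
  refine ⟨sSup Z, ⟨hpos, (csSup_le ⟨_, hquarter⟩ hZ).trans_lt hp₁.2⟩,
    fun p hp hlt => ?_, fun p hlt hp => ?_⟩
  · obtain ⟨q, hq, hpq⟩ := exists_lt_of_lt_csSup ⟨_, hquarter⟩ hlt
    have h0 : P p (LIP α η) = 0 := le_antisymm ((hle hp hpq.le hq.1.2).trans_eq hq.2) zero_le
    exact ⟨measure_lipPyr_eq_zero hη h0, h0⟩
  · have hPp := hP p ⟨hpos.le.trans hlt.le, hp⟩
    have h1 : P p (LIP α η) = 1 := (hPp.lipAbove_zero_or_one _).resolve_left fun h0 =>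
      hlt.not_ge (le_csSup ⟨p₁, hZ⟩ ⟨⟨hpos.le.trans hlt.le, hp⟩, h0⟩)
    exact ⟨hPp.measure_lipPyr_eq_one hη h1, h1⟩
end

section
/- For every dimension d ≥ 1, every α ∈ [0,1), every η ∈ {−1,0,+1}^d and every p ∈ [0,1], the probability of existence of an open Lipschitz surface above the tilted plane satisfies the zero-one law P_p(LIP^{α,d}_η) ∈ {0,1}. -/
open MeasureTheory Filter ENNReal

open ProbabilityTheory

/-- The Bernoulli(`p`) distribution on `Bool`. -/
noncomputable def boolBernoulli (p : ℝ) : Measure Bool :=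
  ENNReal.ofReal p • Measure.dirac true + ENNReal.ofReal (1 - p) • Measure.dirac false

lemma isProbabilityMeasure_boolBernoulli {p : ℝ} (hp : p ∈ Set.Icc (0 : ℝ) 1) :
    IsProbabilityMeasure (boolBernoulli p) := by
  refine ⟨?_⟩
  simp [boolBernoulli, ← ENNReal.ofReal_add hp.1 (sub_nonneg.2 hp.2)]

lemma boolBernoulli_singleton (p : ℝ) (b : Bool) :
    boolBernoulli p {b} = if b then ENNReal.ofReal p else ENNReal.ofReal (1 - p) := by
  cases b <;> simp [boolBernoulli]

/-- The cylinder probabilities identify `P` as the product of the Bernoulli(`p`) marginals. -/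
lemma IsBernoulli.eq_infinitePi {ι : Type*} {p : ℝ} {P : Measure (ι → Bool)}
    (hP : IsBernoulli p P) [IsProbabilityMeasure (boolBernoulli p)] :
    P = Measure.infinitePi fun _ => boolBernoulli p := by
  classical
  refine Measure.eq_infinitePi _ fun s t _ => ?_
  by_cases hempty : ∃ x ∈ s, t x = ∅
  · obtain ⟨x, hx, htx⟩ := hempty
    rw [Finset.prod_eq_zero hx (by simp [htx]), Set.pi_eq_empty (i := x) hx htx,
      measure_empty]
  push Not at hempty
  have hsingleton : ∀ x ∈ s, t x ≠ Set.univ → t x = {decide (true ∈ t x)} := by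
    intro x hx hne
    have hne' := hempty x hx
    rw [Set.ne_univ_iff_exists_notMem] at hne
    obtain ⟨b, hb⟩ := hne
    obtain ⟨c, hc⟩ := hne'
    ext a
    cases a <;> cases b <;> cases c <;> simp_all
  have hcyl : Set.pi (s : Set ι) t =
      {ω | ∀ x ∈ s.filter (fun x => t x ≠ Set.univ), ω x = decide (true ∈ t x)} := by
    ext ω
    simp only [Set.mem_pi, Finset.mem_coe, Set.mem_ofPred_eq, Finset.mem_filter, and_imp]
    refine forall₂_congr fun x hx => ?_
    by_cases h : t x = Set.univ
    · simp [h]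
    · have := hsingleton x hx h
      constructor
      · intro hω _
        rw [this] at hω
        exact hω
      · intro hω
        rw [this]
        exact hω h
  rw [hcyl, hP.2, Finset.prod_filter]
  refine Finset.prod_congr rfl fun x hx => ?_
  split_ifs with h h'
  · rw [hsingleton x hx h, boolBernoulli_singleton, if_pos h']
  · rw [hsingleton x hx h, boolBernoulli_singleton, if_neg h']
  · rw [not_not.1 h, measure_univ]

/-- Kolmogorov's zero-one law for events in a product space that are insensitive to changing
finitely many coordinates. -/
lemma measure_zero_or_one_of_finite_change {ι X : Type*} [MeasurableSpace X] [Nonempty X]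
    (μ : Measure X) [IsProbabilityMeasure μ] {A : Set (ι → X)} (hA : MeasurableSet A)
    (hchange : ∀ ω ω' : ι → X, {x | ω x ≠ ω' x}.Finite → ω ∈ A → ω' ∈ A) :
    Measure.infinitePi (fun _ : ι => μ) A = 0 ∨ Measure.infinitePi (fun _ : ι => μ) A = 1 := by
  classical
  have hindep : iIndep (fun x : ι => MeasurableSpace.comap (fun ω : ι → X => ω x) inferInstance)
      (Measure.infinitePi fun _ : ι => μ) :=
    iIndepFun_infinitePi (X := fun _ : ι => (id : X → X)) fun _ => measurable_id
  refine measure_zero_or_one_of_measurableSet_limsup (p := Set.Finite) (f := cofinite)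
    (ns := fun s : Finset ι => (s : Set ι)) (fun x => (measurable_pi_apply x).comap_le) hindep
    (fun t ht => ht.compl_mem_cofinite) (Monotone.directed_le fun s t h => by simpa using h)
    (fun s => s.finite_toSet) (fun x => ⟨{x}, by simp⟩) ?_
  rw [limsup_eq_iInf_iSup]
  simp only [MeasurableSpace.measurableSet_iInf]
  intro S hS
  obtain ⟨a⟩ := ‹Nonempty X›
  let g : (ι → X) → ι → X := fun ω x => if x ∈ S then ω x else a
  have hg : Measurable[⨆ x ∈ S, MeasurableSpace.comap (fun ω : ι → X => ω x) inferInstance] g := by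
    refine @measurable_pi_lambda _ _ _ (_) _ _ fun x => ?_
    by_cases hx : x ∈ S
    · simp only [g, hx, if_true]
      exact (comap_measurable _).mono (le_iSup₂_of_le x hx le_rfl) le_rfl
    · simp only [g, hx, if_false]
      exact measurable_const
  have hgA : g ⁻¹' A = A := by
    have hfin : ∀ ω, {x | ω x ≠ g ω x}.Finite := fun ω =>
      Set.Finite.subset hS fun x hx hxS => hx (by simp [g, hxS])
    ext ω
    exact ⟨hchange _ _ (by simpa only [ne_comm] using hfin ω), hchange _ _ (hfin ω)⟩
  rw [← hgA]
  exact hg hA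

/-- A Lipschitz function grows at most linearly in the `ℓ¹` norm. -/
lemma IsLipschitzFn.abs_sub_le {d : ℕ} {F : (Fin d → ℤ) → ℤ} (hF : IsLipschitzFn F)
    (x : Fin d → ℤ) : |F x - F 0| ≤ ∑ i, |x i| := by
  obtain ⟨n, hn⟩ := Int.eq_ofNat_of_zero_le (Finset.sum_nonneg fun i (_ : i ∈ Finset.univ) =>
    abs_nonneg (x i))
  rw [hn]
  induction n generalizing x with
  | zero =>
    have hx : x = 0 := by
      funext i
      simpa using (Finset.sum_eq_zero_iff_of_nonneg fun i _ => abs_nonneg (x i)).1 hn i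
        (Finset.mem_univ i)
    simp [hx]
  | succ n ih =>
    obtain ⟨i, hi⟩ : ∃ i, x i ≠ 0 := by
      by_contra! h
      simp only [h, abs_zero, Finset.sum_const_zero] at hn
      omega
    set y := Function.update x i (x i - (x i).sign) with hy
    have hyi : |y i| = |x i| - 1 := by
      rcases lt_or_gt_of_ne hi with h | h
      · simp only [hy, Function.update_self, Int.sign_eq_neg_one_of_neg h, abs_of_neg h]
        rw [abs_of_nonpos (by omega)]
        ring
      · simp only [hy, Function.update_self, Int.sign_eq_one_of_pos h, abs_of_pos h]
        rw [abs_of_nonneg (by omega)]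
    have hyj : ∀ j ∈ Finset.univ.erase i, y j = x j := fun j hj => by
      simp [hy, Finset.ne_of_mem_erase hj]
    have hxy : ∑ j, |x j - y j| = 1 := by
      rw [← Finset.add_sum_erase _ _ (Finset.mem_univ i),
        Finset.sum_eq_zero fun j hj => by simp [hyj j hj]]
      simp [hy, hi, Int.abs_sign_of_ne_zero]
    have hsum : ∑ j, |y j| = n := by
      rw [← Finset.add_sum_erase _ _ (Finset.mem_univ i)] at hn ⊢
      rw [Finset.sum_congr rfl fun j hj => by rw [hyj j hj], hyi]
      push_cast at hn
      linarith
    calc |F x - F 0| ≤ |F x - F y| + |F y - F 0| := _root_.abs_sub_le _ _ _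
      _ ≤ 1 + n := add_le_add (hF x y hxy) (ih y hsum)
      _ = (n + 1 : ℕ) := by push_cast; ring

/-- The event that there is an open Lipschitz surface lying strictly above the graph of `g`. -/
def lipschitzAbove {d : ℕ} (g : (Fin d → ℤ) → ℤ) : Set (Config d) :=
  {ω | ∃ F : (Fin d → ℤ) → ℤ, IsLipschitzFn F ∧
    ∀ x : Fin d → ℤ, ω (Fin.snoc x (F x)) = true ∧ g x < F x}

lemma lipschitzAbove_antitone {d : ℕ} : Antitone (lipschitzAbove (d := d)) :=
  fun _ _ hgg' _ ⟨F, hF, h⟩ => ⟨F, hF, fun x => ⟨(h x).1, (hgg' x).trans_lt (h x).2⟩⟩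

lemma isClosed_setOf_openSurface {d : ℕ} (g : (Fin d → ℤ) → ℤ) :
    IsClosed {q : Config d × ((Fin d → ℤ) → ℤ) | IsLipschitzFn q.2 ∧
      ∀ x : Fin d → ℤ, q.1 (Fin.snoc x (q.2 x)) = true ∧ g x < q.2 x} := by
  have hval (x : Fin d → ℤ) : Continuous fun q : Config d × ((Fin d → ℤ) → ℤ) => q.2 x :=
    (continuous_apply x).comp continuous_snd
  have hopen (x : Fin d → ℤ) :
      {q : Config d × ((Fin d → ℤ) → ℤ) | q.1 (Fin.snoc x (q.2 x)) = true} =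
        ⋂ n : ℤ, {q | q.2 x = n → q.1 (Fin.snoc x n) = true} := by
    ext q
    simp
  simp only [IsLipschitzFn, Set.ofPred_and, Set.ofPred_forall]
  refine IsClosed.inter ?_ (isClosed_iInter fun x => IsClosed.inter ?_ ?_)
  · refine isClosed_iInter fun x => isClosed_iInter fun y => isClosed_iInter fun _ => ?_
    exact isClosed_le ((hval x).sub (hval y)).abs continuous_const
  · rw [hopen]
    refine isClosed_iInter fun n => isClosed_imp ?_ ?_
    · exact (isOpen_discrete {n}).preimage (hval x)
    · exact isClosed_eq ((continuous_apply _).comp continuous_fst) continuous_const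
  · exact (isClosed_discrete (Set.Ioi (g x))).preimage (hval x)

lemma measurableSet_lipschitzAbove {d : ℕ} (g : (Fin d → ℤ) → ℤ) :
    MeasurableSet (lipschitzAbove g) := by
  let K (h : ℤ) : Set ((Fin d → ℤ) → ℤ) :=
    Set.univ.pi fun x => Set.Icc (h - ∑ i, |x i|) (h + ∑ i, |x i|)
  have hK (h : ℤ) : IsCompact (K h) := isCompact_univ_pi fun _ => isCompact_Icc
  have hunion : lipschitzAbove g = ⋃ h : ℤ, Prod.fst '' ((Set.univ ×ˢ K h) ∩
      {q : Config d × ((Fin d → ℤ) → ℤ) | IsLipschitzFn q.2 ∧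
        ∀ x : Fin d → ℤ, q.1 (Fin.snoc x (q.2 x)) = true ∧ g x < q.2 x}) := by
    ext ω
    simp only [Set.mem_iUnion, Set.mem_image, Prod.exists, exists_and_right, exists_eq_right]
    constructor
    · rintro ⟨F, hF, h⟩
      refine ⟨F 0, F, ⟨Set.mem_univ _, fun x _ => ?_⟩, hF, h⟩
      have := abs_le.1 (hF.abs_sub_le x)
      constructor <;> linarith
    · rintro ⟨_, F, _, hF⟩
      exact ⟨F, hF⟩
  rw [hunion]
  exact MeasurableSet.iUnion fun h => (((isCompact_univ.prod (hK h)).inter_right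
    (isClosed_setOf_openSurface g)).image continuous_fst).measurableSet

/-- Translation of `ℤ^{d+1}` by `n` in the last coordinate. -/
def verticalShift {d : ℕ} (n : ℤ) (y : Site d) : Site d := y + Pi.single (Fin.last d) n

lemma verticalShift_injective {d : ℕ} (n : ℤ) : Function.Injective (verticalShift (d := d) n) :=
  add_left_injective _

lemma verticalShift_snoc {d : ℕ} (n m : ℤ) (x : Fin d → ℤ) :
    verticalShift n (Fin.snoc x m : Site d) = Fin.snoc x (m + n) := by
  funext i
  refine Fin.lastCases ?_ (fun j => ?_) i
  · simp [verticalShift]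
  · simp [verticalShift, Fin.castSucc_ne_last]

lemma IsLipschitzFn.add_const {d : ℕ} {F : (Fin d → ℤ) → ℤ} (hF : IsLipschitzFn F) (n : ℤ) :
    IsLipschitzFn fun x => F x + n :=
  fun x y hxy => by simpa using hF x y hxy

lemma comp_verticalShift_mem_lipschitzAbove {d : ℕ} (g : (Fin d → ℤ) → ℤ) (n : ℤ)
    (ω : Config d) :
    ω ∘ verticalShift n ∈ lipschitzAbove g ↔ ω ∈ lipschitzAbove fun x => g x + n := by
  constructor
  · rintro ⟨F, hF, h⟩
    refine ⟨fun x => F x + n, hF.add_const n, fun x => ⟨?_, by simpa using (h x).2⟩⟩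
    rw [← verticalShift_snoc]
    exact (h x).1
  · rintro ⟨F, hF, h⟩
    refine ⟨fun x => F x + -n, hF.add_const (-n), fun x => ⟨?_, ?_⟩⟩
    · rw [Function.comp_apply, verticalShift_snoc, neg_add_cancel_right]
      exact (h x).1
    · linarith [(h x).2]

lemma measure_lipschitzAbove_add {d : ℕ} (μ : Measure Bool) [IsProbabilityMeasure μ]
    (g : (Fin d → ℤ) → ℤ) (n : ℤ) :
    Measure.infinitePi (fun _ : Site d => μ) (lipschitzAbove fun x => g x + n) =
      Measure.infinitePi (fun _ : Site d => μ) (lipschitzAbove g) := by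
  have hmap := Measure.map_infinitePi_infinitePi_of_inj (P := fun _ : Site d => μ)
    (verticalShift_injective (d := d) n)
  have hmeas : Measurable fun (ω : Config d) y => ω (verticalShift n y) := by fun_prop
  conv_rhs => rw [← hmap, Measure.map_apply hmeas (measurableSet_lipschitzAbove g)]
  congr 1
  ext ω
  exact (comp_verticalShift_mem_lipschitzAbove g n ω).symm

/-- The existence of surfaces above arbitrarily high translates of the graph of `g` is not
affected by changing finitely many sites. -/
lemma mem_iInter_lipschitzAbove_of_finite_change {d : ℕ} (g : (Fin d → ℤ) → ℤ)
    {ω ω' : Config d} (hfin : {y | ω y ≠ ω' y}.Finite)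
    (hω : ω ∈ ⋂ n : ℕ, lipschitzAbove fun x => g x + n) :
    ω' ∈ ⋂ n : ℕ, lipschitzAbove fun x => g x + n := by
  obtain ⟨b, hb⟩ := (hfin.image fun y => y (Fin.last d) - g (Fin.init y)).bddAbove
  rw [Set.mem_iInter] at hω ⊢
  intro n
  obtain ⟨F, hF, h⟩ := hω (max n b.toNat)
  refine ⟨F, hF, fun x => ?_⟩
  obtain ⟨hopen, hlt⟩ := h x
  replace hlt : g x + (max n b.toNat : ℕ) < F x := hlt
  refine ⟨?_, show g x + (n : ℤ) < F x by omega⟩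
  rw [← hopen]
  by_contra hne
  have hle := hb ⟨Fin.snoc x (F x), Ne.symm hne, rfl⟩
  simp only [Fin.snoc_last, Fin.init_snoc] at hle
  omega

/-- Zero-one law: for every `p`, the probability of existence of an open
Lipschitz surface above the tilted plane `L^{α,d}_η` is either `0` or `1`. -/
theorem zero_one_law_LIP
    {d : ℕ} (hd : 1 ≤ d) (α : ℝ) (hα : α ∈ Set.Ico (0 : ℝ) 1)
    (η : Fin d → ℤ) (hη : IsSign η)
    (p : ℝ) (hp : p ∈ Set.Icc (0 : ℝ) 1)
    (P : Measure (Config d)) (hP : IsBernoulli p P) :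
    P (LIP α η) = 0 ∨ P (LIP α η) = 1 := by
  have := isProbabilityMeasure_boolBernoulli hp
  have hinter : P (⋂ n : ℕ, lipschitzAbove fun x => planeHt α η x + n) = P (LIP α η) := by
    rw [hP.eq_infinitePi, Antitone.measure_iInter]
    · exact (iInf_congr fun n : ℕ => measure_lipschitzAbove_add _ _ (n : ℤ)).trans ciInf_const
    · intro m n hmn
      exact lipschitzAbove_antitone fun x => by simpa using hmn
    · exact fun n => (measurableSet_lipschitzAbove _).nullMeasurableSet
    · exact ⟨0, measure_ne_top _ _⟩
  rw [← hinter, hP.eq_infinitePi]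
  exact measure_zero_or_one_of_finite_change _
    (MeasurableSet.iInter fun n => measurableSet_lipschitzAbove _)
    fun ω ω' hfin => mem_iInter_lipschitzAbove_of_finite_change _ hfin
end

section
/- Monotonicity in the inclination: for all d ≥ 1, all α, α' ∈ [0,1) with α ≤ α', and all k = 0,…,d, one has p_L(α,d,k) ≤ p_L(α',d,k). -/
open MeasureTheory Filter ENNReal

/-- The cylinder events generating the product `σ`-algebra on `{0,1}^ι`. -/
def cylinderEvents (ι : Type*) : Set (Set (ι → Bool)) :=
  {A | A = ∅ ∨ ∃ (s : Finset ι) (f : ι → Bool), A = {ω | ∀ x ∈ s, ω x = f x}}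

theorem isPiSystem_cylinderEvents (ι : Type*) : IsPiSystem (cylinderEvents ι) := by
  classical
  rintro A (rfl | ⟨s, f, rfl⟩) B (rfl | ⟨t, g, rfl⟩) ⟨ω₀, hA, hB⟩
  · exact hA.elim
  · exact hA.elim
  · exact hB.elim
  · refine Or.inr ⟨s ∪ t, ω₀, ?_⟩
    ext ω
    simp only [Set.mem_inter_iff, Set.mem_ofPred_eq, Finset.mem_union] at *
    constructor
    · rintro ⟨h₁, h₂⟩ x (hx | hx)
      · rw [h₁ x hx, hA x hx]
      · rw [h₂ x hx, hB x hx]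
    · intro h
      exact ⟨fun x hx => by rw [h x (Or.inl hx), hA x hx],
        fun x hx => by rw [h x (Or.inr hx), hB x hx]⟩

theorem measurableSet_cylinder {ι : Type*} (s : Finset ι) (f : ι → Bool) :
    MeasurableSet {ω : ι → Bool | ∀ x ∈ s, ω x = f x} := by
  have : {ω : ι → Bool | ∀ x ∈ s, ω x = f x} = ⋂ x ∈ s, (fun ω => ω x) ⁻¹' {f x} := by
    ext ω
    simp
  rw [this]
  exact s.measurableSet_biInter fun x _ =>
    measurable_pi_apply x (MeasurableSet.of_discrete (s := {f x}))

theorem generateFrom_cylinderEvents (ι : Type*) :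
    (MeasurableSpace.pi : MeasurableSpace (ι → Bool)) =
      MeasurableSpace.generateFrom (cylinderEvents ι) := by
  apply le_antisymm
  · refine iSup_le fun x => ?_
    rw [← measurable_iff_comap_le]
    refine @measurable_to_countable' _ _ _ _ (MeasurableSpace.generateFrom (cylinderEvents ι))
      _ fun b => ?_
    refine MeasurableSpace.measurableSet_generateFrom (Or.inr ⟨{x}, fun _ => b, ?_⟩)
    ext ω
    simp
  · refine MeasurableSpace.generateFrom_le ?_
    rintro A (rfl | ⟨s, f, rfl⟩)
    · exact MeasurableSet.empty
    · exact measurableSet_cylinder s f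

theorem IsBernoulli.eq {ι : Type*} {p : ℝ} {P Q : Measure (ι → Bool)}
    (hP : IsBernoulli p P) (hQ : IsBernoulli p Q) : P = Q := by
  have := hP.1
  have := hQ.1
  refine ext_of_generate_finite _ (generateFrom_cylinderEvents ι)
    (isPiSystem_cylinderEvents ι) ?_ (by simp)
  rintro A (rfl | ⟨s, f, rfl⟩)
  · simp
  · rw [hP.2, hQ.2]

theorem measurable_relabel {ι : Type*} (e : ι ≃ ι) :
    Measurable fun (ω : ι → Bool) x => ω (e x) :=
  measurable_pi_lambda _ fun x => measurable_pi_apply (e x)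

theorem IsBernoulli.map_relabel {ι : Type*} {p : ℝ} {P : Measure (ι → Bool)}
    (hP : IsBernoulli p P) (e : ι ≃ ι) : P.map (fun ω x => ω (e x)) = P := by
  have := hP.1
  refine IsBernoulli.eq
    ⟨Measure.isProbabilityMeasure_map (measurable_relabel e).aemeasurable, fun s f => ?_⟩ hP
  rw [Measure.map_apply (measurable_relabel e) (measurableSet_cylinder s f)]
  have : (fun (ω : ι → Bool) x => ω (e x)) ⁻¹' {ω | ∀ x ∈ s, ω x = f x} =
      {ω | ∀ x ∈ s.map e.toEmbedding, ω x = f (e.symm x)} := by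
    ext ω
    simp only [Set.mem_preimage, Set.mem_ofPred_eq, Finset.forall_mem_map,
      Equiv.coe_toEmbedding, Equiv.symm_apply_apply]
  rw [this, hP.2, Finset.prod_map]
  simp

/-- The increments of Lipschitz functions along a fixed vector are uniformly bounded. -/
theorem exists_bound_increment {d : ℕ} (v : Fin d → ℤ) :
    ∃ B : ℤ, ∀ F : (Fin d → ℤ) → ℤ, IsLipschitzFn F → ∀ x, |F (x + v) - F x| ≤ B := by
  let S : AddSubgroup (Fin d → ℤ) :=
    { carrier := {v | ∃ B : ℤ, ∀ F : (Fin d → ℤ) → ℤ, IsLipschitzFn F →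
        ∀ x, |F (x + v) - F x| ≤ B}
      zero_mem' := ⟨0, fun F _ x => by simp⟩
      add_mem' := by
        rintro v w ⟨B, hB⟩ ⟨C, hC⟩
        refine ⟨B + C, fun F hF x => ?_⟩
        have h₁ := hB F hF x
        have h₂ := hC F hF (x + v)
        rw [← add_assoc]
        calc |F (x + v + w) - F x| ≤ |F (x + v + w) - F (x + v)| + |F (x + v) - F x| :=
              abs_sub_le _ _ _
          _ ≤ B + C := by linarith
      neg_mem' := by
        rintro v ⟨B, hB⟩
        refine ⟨B, fun F hF x => ?_⟩
        have h := hB F hF (x + -v)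
        rwa [neg_add_cancel_right, abs_sub_comm] at h }
  have hunit : ∀ i, (Pi.single i 1 : Fin d → ℤ) ∈ S := fun i =>
    ⟨1, fun F hF x => hF _ _ (by
      simp only [Pi.add_apply, add_sub_cancel_left]
      rw [Finset.sum_eq_single i (fun j _ hj => by simp [hj]) (by simp)]
      simp)⟩
  have hv : v = ∑ i, v i • (Pi.single i 1 : Fin d → ℤ) := by
    ext j
    simp [Finset.sum_apply, Pi.single_apply]
  change v ∈ S
  rw [hv]
  exact S.sum_mem fun i _ => S.zsmul_mem (hunit i) _

/-- The pairs of a configuration and an open Lipschitz surface above the tilted plane having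
height `h` at the origin. -/
def surfacePairs (α : ℝ) {d : ℕ} (η : Fin d → ℤ) (h : ℤ) :
    Set (Config d × ((Fin d → ℤ) → ℤ)) :=
  {q | IsLipschitzFn q.2 ∧ q.2 0 = h ∧
    ∀ x : Fin d → ℤ, q.1 (Fin.snoc x (q.2 x)) = true ∧ planeHt α η x < q.2 x}

theorem isClosed_surfacePairs (α : ℝ) {d : ℕ} (η : Fin d → ℤ) (h : ℤ) :
    IsClosed (surfacePairs α η h) := by
  have hev : ∀ x : Fin d → ℤ,
      Continuous fun q : Config d × ((Fin d → ℤ) → ℤ) => q.2 x := fun x => by fun_prop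
  have hopen : ∀ x : Fin d → ℤ, Continuous fun q : Config d × ((Fin d → ℤ) → ℤ) =>
      q.1 (Fin.snoc x (q.2 x)) := by
    intro x
    have huncurry : Continuous fun r : Config d × ℤ => r.1 (Fin.snoc x r.2) :=
      continuous_prod_of_discrete_right.mpr fun n =>
        continuous_apply (A := fun _ : Site d => Bool) (Fin.snoc x n : Site d)
    exact huncurry.comp (continuous_fst.prodMk (hev x))
  simp only [surfacePairs, IsLipschitzFn, Set.ofPred_and, Set.ofPred_forall]
  refine IsClosed.inter ?_ (IsClosed.inter ?_ ?_)
  · refine isClosed_iInter fun x => isClosed_iInter fun y => isClosed_iInter fun _ => ?_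
    exact isClosed_le ((hev x).sub (hev y)).abs continuous_const
  · exact isClosed_eq (hev 0) continuous_const
  · refine isClosed_iInter fun x => IsClosed.inter ?_ ?_
    · exact isClosed_eq (hopen x) continuous_const
    · exact (isClosed_discrete (Set.Ioi (planeHt α η x))).preimage (hev x)

theorem isCompact_surfacePairs (α : ℝ) {d : ℕ} (η : Fin d → ℤ) (h : ℤ) :
    IsCompact (surfacePairs α η h) := by
  choose B hB using exists_bound_increment (d := d)
  have hK : IsCompact ((Set.univ : Set (Config d)) ×ˢ
      Set.pi Set.univ fun x : Fin d → ℤ => Set.Icc (h - B x) (h + B x)) :=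
    isCompact_univ.prod (isCompact_univ_pi fun x => isCompact_Icc)
  refine hK.of_isClosed_subset (isClosed_surfacePairs α η h) ?_
  rintro ⟨ω, F⟩ ⟨hF, h0, -⟩
  refine ⟨Set.mem_univ _, fun x _ => ?_⟩
  have := hB x F hF 0
  rw [zero_add] at this
  obtain ⟨h₁, h₂⟩ := abs_le.mp this
  simp only at h0
  constructor <;> simp only <;> linarith

theorem measurableSet_LIP (α : ℝ) {d : ℕ} (η : Fin d → ℤ) : MeasurableSet (LIP α η) := by
  have : LIP α η = ⋃ h : ℤ, Prod.fst '' surfacePairs α η h := by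
    ext ω
    simp [LIP, surfacePairs]
  rw [this]
  exact MeasurableSet.iUnion fun h =>
    ((isCompact_surfacePairs α η h).image continuous_fst).isClosed.measurableSet

/-- The reflection of `ℤ^{d+1}` negating the first `d` coordinates. -/
def reflectSite (d : ℕ) : Site d ≃ Site d :=
  Function.Involutive.toPerm
    (fun y => Fin.snoc (α := fun _ => ℤ) (fun i => -y i.castSucc) (y (Fin.last d)))
    fun y => by
      ext j
      refine Fin.lastCases ?_ (fun i => ?_) j <;> simp

theorem reflectSite_snoc {d : ℕ} (x : Fin d → ℤ) (n : ℤ) :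
    reflectSite d (Fin.snoc x n) = Fin.snoc (-x) n := by
  ext j
  refine Fin.lastCases ?_ (fun i => ?_) j <;> simp [reflectSite, Function.Involutive.toPerm]

theorem planeHt_le_max {d : ℕ} {α α' : ℝ} (hα : 0 ≤ α) (hαα' : α ≤ α') (η x : Fin d → ℤ) :
    planeHt α η x ≤ max (planeHt α' η x) (planeHt α' η (-x)) := by
  have hneg : ∑ i, (η i : ℝ) * ((-x) i : ℝ) = -∑ i, (η i : ℝ) * (x i : ℝ) := by
    simp
  rw [le_max_iff]
  rcases le_total 0 (∑ i, (η i : ℝ) * (x i : ℝ)) with hs | hs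
  · exact Or.inl (Int.floor_le_floor (mul_le_mul_of_nonneg_right hαα' hs))
  · refine Or.inr (Int.floor_le_floor ?_)
    simp only [hneg]
    nlinarith

theorem IsLipschitzFn.comp_neg {d : ℕ} {F : (Fin d → ℤ) → ℤ} (hF : IsLipschitzFn F) :
    IsLipschitzFn fun x => F (-x) := by
  intro x y hxy
  refine hF _ _ ?_
  rw [← hxy]
  refine Finset.sum_congr rfl fun i _ => ?_
  rw [Pi.neg_apply, Pi.neg_apply, neg_sub_neg, abs_sub_comm]

theorem IsLipschitzFn.max {d : ℕ} {F G : (Fin d → ℤ) → ℤ} (hF : IsLipschitzFn F)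
    (hG : IsLipschitzFn G) : IsLipschitzFn fun x => max (F x) (G x) := fun x y hxy =>
  (abs_max_sub_max_le_max _ _ _ _).trans (max_le (hF x y hxy) (hG x y hxy))

/-- The maximum of a surface above a steep plane and a surface above its mirror image lies
above every plane of smaller inclination. -/
theorem LIP_inter_reflect_subset {d : ℕ} {α α' : ℝ} (hα : 0 ≤ α) (hαα' : α ≤ α')
    (η : Fin d → ℤ) :
    LIP α' η ∩ (fun (ω : Config d) y => ω (reflectSite d y)) ⁻¹' LIP α' η ⊆ LIP α η := by
  rintro ω ⟨⟨F, hF, hFω⟩, G, hG, hGω⟩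
  refine ⟨fun x => max (F x) (G (-x)), hF.max hG.comp_neg, fun x => ⟨?_, ?_⟩⟩
  · have h : ω (reflectSite d (Fin.snoc (-x) (G (-x)))) = true := (hGω (-x)).1
    rw [reflectSite_snoc, neg_neg] at h
    rcases max_choice (F x) (G (-x)) with hm | hm
    · simp only [hm, (hFω x).1]
    · simp only [hm, h]
  · exact (planeHt_le_max hα hαα' η x).trans_lt (max_lt_max (hFω x).2 (hGω (-x)).2)

/-- Monotonicity in the inclination: `α ≤ α'` implies
`p_L(α,d,k) ≤ p_L(α',d,k)`. -/
theorem critical_prob_mono_in_inclination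
    {d : ℕ} (hd : 1 ≤ d) (α α' : ℝ) (hα : α ∈ Set.Ico (0 : ℝ) 1)
    (hα' : α' ∈ Set.Ico (0 : ℝ) 1) (hαα' : α ≤ α') (k : ℕ) (hk : k ≤ d)
    (P : ℝ → Measure (Config d)) (hP : ∀ p ∈ Set.Icc (0 : ℝ) 1, IsBernoulli p (P p))
    (pc pc' : ℝ) (hpc : IsCriticalProb P α (etaK d k) pc)
    (hpc' : IsCriticalProb P α' (etaK d k) pc') :
    pc ≤ pc' := by
  by_contra! hlt
  obtain ⟨p, hp', hp⟩ := exists_between hlt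
  have h0 : 0 ≤ p := hpc'.1.1.le.trans hp'.le
  have h1 : p ≤ 1 := hp.le.trans hpc.1.2.le
  have hB := hP p ⟨h0, h1⟩
  have := hB.1
  have hmeas := measurableSet_LIP α' (etaK d k)
  have hone : P p (LIP α' (etaK d k)) = 1 := hpc'.2.2 p hp' h1
  have hrefl : P p ((fun (ω : Config d) y => ω (reflectSite d y)) ⁻¹' LIP α' (etaK d k)) = 1 := by
    rw [← Measure.map_apply (measurable_relabel _) hmeas, hB.map_relabel, hone]
  have hae := (mem_ae_iff_prob_eq_one hmeas).mpr hone
  have hae' := (mem_ae_iff_prob_eq_one (measurable_relabel _ hmeas)).mpr hrefl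
  have hfull : LIP α (etaK d k) ∈ ae (P p) :=
    mem_of_superset (inter_mem hae hae') (LIP_inter_reflect_subset hα.1 hαα' _)
  have := (mem_ae_iff_prob_eq_one (measurableSet_LIP α _)).mp hfull
  rw [hpc.2.1 p h0 hp] at this
  exact zero_ne_one this
end

section
/- General lower bound: for every d ≥ 1 and every α ∈ [0,1), one has q_L(α,d,d) ≥ (1/2)·(4d)^{−1/(1−α)}. -/
open MeasureTheory Filter ENNReal

namespace TiltedLipschitz

variable {d : ℕ}

/-- Steps of a reversed admissible path: `none` goes one unit down from a closed site, and
`some (i, b)` goes one unit up while moving by `±1` in the `i`-th horizontal direction. -/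
abbrev Step (d : ℕ) := Option (Fin d × Bool)

/-- The horizontal displacement of a diagonal step. -/
def displacement (s : Fin d × Bool) : Fin d → ℤ := Pi.single s.1 (if s.2 then 1 else -1)

/-- The position after one step. -/
def move (v : (Fin d → ℤ) × ℤ) : Step d → (Fin d → ℤ) × ℤ
  | none => (v.1, v.2 - 1)
  | some s => (v.1 + displacement s, v.2 + 1)

/-- The endpoint of the path that starts at `v` and follows the given steps. -/
def endpoint (v : (Fin d → ℤ) × ℤ) : List (Step d) → (Fin d → ℤ) × ℤ
  | [] => v
  | s :: l => endpoint (move v s) l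

/-- The sites that a path requires to be closed. -/
def closedSites (v : (Fin d → ℤ) × ℤ) : List (Step d) → List ((Fin d → ℤ) × ℤ)
  | [] => []
  | none :: l => v :: closedSites (move v none) l
  | some s :: l => closedSites (move v (some s)) l

/-- A point of `ℤ^d × ℤ` as a site of `ℤ^{d+1}`. -/
def toSite (v : (Fin d → ℤ) × ℤ) : Site d := Fin.snoc v.1 v.2

lemma toSite_injective : Function.Injective (toSite (d := d)) := by
  rintro ⟨x, a⟩ ⟨y, b⟩ h
  have h' : (Fin.snoc x a : Fin (d + 1) → ℤ) = Fin.snoc y b := h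
  have := Fin.snoc_injective2 h'
  simp [this.1, this.2]

/-- The path from `v` is admissible for `ω` and ends on the graph of `g`. -/
def Admissible (g : (Fin d → ℤ) → ℤ) (ω : Config d) (v : (Fin d → ℤ) × ℤ)
    (l : List (Step d)) : Prop :=
  (∀ w ∈ closedSites v l, ω (toSite w) = false) ∧ (endpoint v l).2 = g (endpoint v l).1

/-- Some admissible path joins `v` to the graph of `g`. -/
def Reachable (g : (Fin d → ℤ) → ℤ) (ω : Config d) (v : (Fin d → ℤ) × ℤ) : Prop :=
  ∃ l, Admissible g ω v l

variable {g : (Fin d → ℤ) → ℤ} {ω : Config d}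

lemma admissible_none_cons {v : (Fin d → ℤ) × ℤ} {l : List (Step d)} :
    Admissible g ω v (none :: l) ↔
      ω (toSite v) = false ∧ Admissible g ω (move v none) l := by
  simp [Admissible, closedSites, endpoint, and_assoc]

lemma admissible_some_cons {v : (Fin d → ℤ) × ℤ} {s : Fin d × Bool} {l : List (Step d)} :
    Admissible g ω v (some s :: l) ↔ Admissible g ω (move v (some s)) l := by
  simp [Admissible, closedSites, endpoint]

lemma exists_admissible_of_mem_closedSites {v w : (Fin d → ℤ) × ℤ} {l : List (Step d)}
    (hl : Admissible g ω v l) (hw : w ∈ closedSites v l) :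
    ∃ l', Admissible g ω w l' ∧ l'.length ≤ l.length := by
  induction l generalizing v with
  | nil => simp [closedSites] at hw
  | cons s l ih =>
    cases s with
    | none =>
      rcases List.mem_cons.1 hw with rfl | hw
      · exact ⟨_, hl, le_rfl⟩
      · obtain ⟨l', h, h'⟩ := ih (admissible_none_cons.1 hl).2 hw
        exact ⟨l', h, h'.trans (by simp)⟩
    | some s =>
      obtain ⟨l', h, h'⟩ := ih (admissible_some_cons.1 hl) hw
      exact ⟨l', h, h'.trans (by simp)⟩

lemma nodup_closedSites_of_minimal {v : (Fin d → ℤ) × ℤ} {l : List (Step d)}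
    (hl : Admissible g ω v l) (hmin : ∀ l', Admissible g ω v l' → l.length ≤ l'.length) :
    (closedSites v l).Nodup := by
  induction l generalizing v with
  | nil => simp [closedSites]
  | cons s l ih =>
    cases s with
    | none =>
      have hl' := admissible_none_cons.1 hl
      refine List.nodup_cons.2 ⟨fun hv => ?_, ih hl'.2 fun l' h' => ?_⟩
      · obtain ⟨l', h, h'⟩ := exists_admissible_of_mem_closedSites hl'.2 hv
        have := hmin l' h
        simp only [List.length_cons] at this
        omega
      · simpa using hmin (none :: l') (admissible_none_cons.2 ⟨hl'.1, h'⟩)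
    | some s =>
      exact ih (admissible_some_cons.1 hl) fun l' h' => by
        simpa using hmin (some s :: l') (admissible_some_cons.2 h')

lemma Reachable.exists_nodup {v : (Fin d → ℤ) × ℤ} (h : Reachable g ω v) :
    ∃ l, Admissible g ω v l ∧ (closedSites v l).Nodup := by
  classical
  have hex : ∃ n, ∃ l, Admissible g ω v l ∧ l.length = n := by
    obtain ⟨l, hl⟩ := h
    exact ⟨_, l, hl, rfl⟩
  obtain ⟨l, hl, hn⟩ := Nat.find_spec hex
  exact ⟨l, hl, nodup_closedSites_of_minimal hl fun l' hl' =>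
    hn ▸ Nat.find_min' hex ⟨l', hl', rfl⟩⟩

lemma reachable_base (x : Fin d → ℤ) : Reachable g ω (x, g x) :=
  ⟨[], by simp [Admissible, closedSites, endpoint]⟩

lemma Reachable.of_closed {x : Fin d → ℤ} {h : ℤ} (hr : Reachable g ω (x, h))
    (hc : ω (toSite (x, h + 1)) = false) : Reachable g ω (x, h + 1) := by
  obtain ⟨l, hl⟩ := hr
  exact ⟨none :: l, admissible_none_cons.2 ⟨hc, by simpa [move] using hl⟩⟩

lemma Reachable.of_displacement {x y : Fin d → ℤ} {h : ℤ} (hr : Reachable g ω (x, h))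
    (s : Fin d × Bool) (hs : y + displacement s = x) : Reachable g ω (y, h - 1) := by
  obtain ⟨l, hl⟩ := hr
  exact ⟨some s :: l, admissible_some_cons.2 (by simpa [move, hs] using hl)⟩

lemma exists_displacement {x y : Fin d → ℤ} (h : ∑ i, |x i - y i| = 1) :
    ∃ s, y + displacement s = x := by
  obtain ⟨i, -, hi⟩ : ∃ i ∈ Finset.univ, |x i - y i| ≠ 0 :=
    Finset.exists_ne_zero_of_sum_ne_zero (by rw [h]; exact one_ne_zero)
  have hsplit := Finset.add_sum_erase Finset.univ (fun j => |x j - y j|) (Finset.mem_univ i)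
  have hnonneg : 0 ≤ ∑ j ∈ Finset.univ.erase i, |x j - y j| :=
    Finset.sum_nonneg fun _ _ => abs_nonneg _
  have hpos : 0 ≤ |x i - y i| := abs_nonneg _
  simp only [h] at hsplit
  have hrest : ∑ j ∈ Finset.univ.erase i, |x j - y j| = 0 := by omega
  have hone : |x i - y i| = 1 := by omega
  have hother : ∀ j, j ≠ i → x j = y j := fun j hj => by
    have := (Finset.sum_eq_zero_iff_of_nonneg fun _ _ => abs_nonneg _).1 hrest j (by simp [hj])
    rwa [abs_eq_zero, sub_eq_zero] at this
  have key : ∀ b : Bool, x i - y i = (if b then 1 else -1) → y + displacement (i, b) = x := by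
    intro b hb
    funext j
    by_cases hj : j = i
    · subst hj
      simp only [displacement, Pi.add_apply, Pi.single_eq_same]
      omega
    · simp [displacement, hj, hother j hj]
  rcases (abs_eq zero_le_one).1 hone with h1 | h1
  · exact ⟨(i, true), key true (by simpa using h1)⟩
  · exact ⟨(i, false), key false (by simpa using h1)⟩

/-- If the heights reachable above each point are bounded, the least unreachable height above
all of them defines an open Lipschitz surface. -/
lemma exists_lipschitz_of_bddAbove (hb : ∀ x, BddAbove {h : ℤ | Reachable g ω (x, h)}) :
    ∃ F : (Fin d → ℤ) → ℤ, IsLipschitzFn F ∧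
      ∀ x, ω (Fin.snoc x (F x)) = true ∧ g x < F x := by
  have hne : ∀ x, {h : ℤ | Reachable g ω (x, h)}.Nonempty := fun x => ⟨_, reachable_base x⟩
  have hmem : ∀ x, Reachable g ω (x, sSup {h : ℤ | Reachable g ω (x, h)}) := fun x =>
    Int.csSup_mem (hne x) (hb x)
  have hle : ∀ x h, Reachable g ω (x, h) → h ≤ sSup {h : ℤ | Reachable g ω (x, h)} :=
    fun x h hr => le_csSup (hb x) hr
  refine ⟨fun x => sSup {h : ℤ | Reachable g ω (x, h)} + 1, fun x y hxy => ?_,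
    fun x => ⟨?_, ?_⟩⟩
  · obtain ⟨s, hs⟩ := exists_displacement hxy
    obtain ⟨t, ht⟩ := exists_displacement (x := y) (y := x) (by simpa only [abs_sub_comm] using hxy)
    have h1 := hle _ _ ((hmem x).of_displacement s hs)
    have h2 := hle _ _ ((hmem y).of_displacement t ht)
    rw [abs_le]
    constructor <;> linarith
  · by_contra hc
    have := hle _ _ ((hmem x).of_closed (by simpa [toSite] using hc))
    omega
  · exact Int.lt_add_one_iff.2 (hle _ _ (reachable_base x))

/-- The signed height of a point above the plane of slope `α` in every direction. -/
def potential (α : ℝ) (v : (Fin d → ℤ) × ℤ) : ℝ := v.2 - α * ∑ i, (v.1 i : ℝ)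

/-- The weight of a step, exponentially tilted by the change of potential. -/
noncomputable def weight (α q z : ℝ) : Step d → ℝ
  | none => q * z
  | some s => z ^ (-(1 - α * (if s.2 then 1 else -1)))

lemma weight_nonneg {α q z : ℝ} (hq : 0 ≤ q) (hz : 0 < z) (s : Step d) :
    0 ≤ weight α q z s := by
  cases s with
  | none => exact mul_nonneg hq hz.le
  | some s => exact (Real.rpow_pos_of_pos hz _).le

lemma potential_move_none (α : ℝ) (v : (Fin d → ℤ) × ℤ) :
    potential α (move v none) = potential α v - 1 := by
  simp only [potential, move]
  push_cast
  ring

lemma potential_move_some (α : ℝ) (v : (Fin d → ℤ) × ℤ) (s : Fin d × Bool) :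
    potential α (move v (some s)) =
      potential α v + (1 - α * (if s.2 then 1 else -1)) := by
  have h : ∑ i, ((displacement s i : ℤ) : ℝ) = if s.2 then 1 else -1 := by
    rw [← Int.cast_sum]
    simp only [displacement, Finset.sum_pi_single', Finset.mem_univ, if_true]
    split_ifs <;> simp
  simp only [potential, move, Pi.add_apply, Int.cast_add, Finset.sum_add_distrib, h]
  push_cast
  ring

lemma prod_weight {α q z : ℝ} (hz : 0 < z) (v : (Fin d → ℤ) × ℤ) (l : List (Step d)) :
    (l.map (weight α q z)).prod =
      q ^ (closedSites v l).length * z ^ (potential α v - potential α (endpoint v l)) := by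
  induction l generalizing v with
  | nil => simp [closedSites, endpoint]
  | cons s l ih =>
    rw [List.map_cons, List.prod_cons, ih (move v s)]
    cases s with
    | none =>
      simp only [weight, closedSites, endpoint, List.length_cons, potential_move_none]
      rw [show potential α v - potential α (endpoint (move v none) l) =
        1 + (potential α v - 1 - potential α (endpoint (move v none) l)) by ring,
        Real.rpow_add hz, Real.rpow_one]
      ring
    | some s =>
      simp only [weight, closedSites, endpoint, potential_move_some]
      rw [mul_left_comm, ← Real.rpow_add hz]
      congr 2
      ring

lemma pow_length_closedSites_le {α q z : ℝ} (hq : 0 ≤ q) (hz : 1 ≤ z)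
    {v : (Fin d → ℤ) × ℤ} {l : List (Step d)} (hend : potential α (endpoint v l) ≤ 0) :
    q ^ (closedSites v l).length ≤ z ^ (-potential α v) * (l.map (weight α q z)).prod := by
  have hz0 : 0 < z := zero_lt_one.trans_le hz
  rw [prod_weight hz0 v l, mul_left_comm, ← Real.rpow_add hz0]
  exact le_mul_of_one_le_right (pow_nonneg hq _)
    (Real.one_le_rpow hz (by linarith))

lemma measure_closed_eq {p : ℝ} {P : Measure (Config d)} (hP : IsBernoulli p P)
    {L : List ((Fin d → ℤ) × ℤ)} (hL : L.Nodup) :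
    P {ω | ∀ w ∈ L, ω (toSite w) = false} = ENNReal.ofReal (1 - p) ^ L.length := by
  classical
  have h := hP.2 (L.map toSite).toFinset fun _ => false
  have hcard : (L.map toSite).toFinset.card = L.length := by
    rw [List.toFinset_card_of_nodup (hL.map toSite_injective), List.length_map]
  simp only [List.mem_toFinset, List.forall_mem_map, Bool.false_eq_true, if_false,
    Finset.prod_const, hcard] at h
  exact h

/-- The union bound over admissible paths. -/
lemma measure_reachable_le {α p z : ℝ} {P : Measure (Config d)} (hP : IsBernoulli p P)
    (hp : p ≤ 1) (hz : 1 ≤ z) (hg : ∀ x, (g x : ℝ) ≤ α * ∑ i, (x i : ℝ))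
    (v : (Fin d → ℤ) × ℤ) :
    P {ω | Reachable g ω v} ≤ ENNReal.ofReal (z ^ (-potential α v)) *
      (1 - ENNReal.ofReal (∑ s : Step d, weight α (1 - p) z s))⁻¹ := by
  have hq : 0 ≤ 1 - p := by linarith
  have hz0 : 0 < z := zero_lt_one.trans_le hz
  have hw : ∀ s : Step d, 0 ≤ weight α (1 - p) z s := weight_nonneg hq hz0
  have hpath : ∀ l : List (Step d),
      P {ω | Admissible g ω v l ∧ (closedSites v l).Nodup} ≤
        ENNReal.ofReal (z ^ (-potential α v) * (l.map (weight α (1 - p) z)).prod) := by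
    intro l
    by_cases hl : (closedSites v l).Nodup ∧ (endpoint v l).2 = g (endpoint v l).1
    · have hend : potential α (endpoint v l) ≤ 0 := by
        rw [potential, hl.2]
        linarith [hg (endpoint v l).1]
      calc P {ω | Admissible g ω v l ∧ (closedSites v l).Nodup}
          ≤ P {ω | ∀ w ∈ closedSites v l, ω (toSite w) = false} :=
            measure_mono fun ω hω => hω.1.1
        _ = ENNReal.ofReal ((1 - p) ^ (closedSites v l).length) := by
            rw [measure_closed_eq hP hl.1, ENNReal.ofReal_pow hq]
        _ ≤ _ := ENNReal.ofReal_le_ofReal (pow_length_closedSites_le hq hz hend)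
    · have : {ω | Admissible g ω v l ∧ (closedSites v l).Nodup} = ∅ :=
        Set.eq_empty_of_forall_notMem fun ω hω => hl ⟨hω.2, hω.1.2⟩
      simp [this]
  have hsub : {ω | Reachable g ω v} ⊆ ⋃ n : ℕ, ⋃ f : Fin n → Step d,
      {ω | Admissible g ω v (List.ofFn f) ∧ (closedSites v (List.ofFn f)).Nodup} := by
    intro ω hω
    obtain ⟨l, hl, hl'⟩ := Reachable.exists_nodup hω
    simp only [Set.mem_iUnion, Set.mem_ofPred_eq]
    exact ⟨l.length, l.get, by simpa [List.ofFn_get] using ⟨hl, hl'⟩⟩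
  have hlen : ∀ n : ℕ, P (⋃ f : Fin n → Step d,
      {ω | Admissible g ω v (List.ofFn f) ∧ (closedSites v (List.ofFn f)).Nodup}) ≤
      ENNReal.ofReal (z ^ (-potential α v)) *
        ENNReal.ofReal (∑ s : Step d, weight α (1 - p) z s) ^ n := by
    intro n
    refine (measure_iUnion_fintype_le _ _).trans
      ((Finset.sum_le_sum fun f _ => hpath (List.ofFn f)).trans_eq ?_)
    rw [← ENNReal.ofReal_pow (Finset.sum_nonneg fun s _ => hw s),
      ← ENNReal.ofReal_mul (Real.rpow_pos_of_pos hz0 _).le, Fintype.sum_pow, Finset.mul_sum,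
      ENNReal.ofReal_sum_of_nonneg fun f _ => mul_nonneg (Real.rpow_pos_of_pos hz0 _).le
        (Finset.prod_nonneg fun i _ => hw _)]
    refine Finset.sum_congr rfl fun f _ => ?_
    rw [List.map_ofFn, List.prod_ofFn]
    rfl
  calc P {ω | Reachable g ω v} ≤ _ := measure_mono hsub
    _ ≤ _ := measure_iUnion_le _
    _ ≤ _ := ENNReal.tsum_le_tsum hlen
    _ = _ := by rw [ENNReal.tsum_mul_left, ENNReal.tsum_geometric]

lemma ae_bddAbove_reachable {α p z : ℝ} {P : Measure (Config d)} (hP : IsBernoulli p P)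
    (hp : p ≤ 1) (hz : 1 < z) (hg : ∀ x, (g x : ℝ) ≤ α * ∑ i, (x i : ℝ))
    (hsum : ∑ s : Step d, weight α (1 - p) z s < 1) (x : Fin d → ℤ) :
    ∀ᵐ ω ∂P, BddAbove {h : ℤ | Reachable g ω (x, h)} := by
  have hz0 : 0 < z := zero_lt_one.trans hz
  have hfin : ∑' n : ℕ, P {ω | Reachable g ω (x, (n : ℤ))} ≠ ∞ := by
    have hterm : ∀ n : ℕ, P {ω | Reachable g ω (x, (n : ℤ))} ≤
        ENNReal.ofReal (z ^ (α * ∑ i, (x i : ℝ))) *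
          (1 - ENNReal.ofReal (∑ s : Step d, weight α (1 - p) z s))⁻¹ *
          ENNReal.ofReal z⁻¹ ^ n := by
      intro n
      refine (measure_reachable_le hP hp hz.le hg _).trans_eq ?_
      have : z ^ (-potential α (x, (n : ℤ))) = z ^ (α * ∑ i, (x i : ℝ)) * z⁻¹ ^ n := by
        rw [potential, neg_sub, Real.rpow_sub hz0, Int.cast_natCast, Real.rpow_natCast, inv_pow,
          div_eq_mul_inv]
      rw [this, ENNReal.ofReal_mul (Real.rpow_pos_of_pos hz0 _).le,
        ENNReal.ofReal_pow (inv_pos.2 hz0).le]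
      ring
    refine ne_top_of_le_ne_top ?_ (ENNReal.tsum_le_tsum hterm)
    rw [ENNReal.tsum_mul_left, ENNReal.tsum_geometric]
    have hinv : ∀ r : ℝ, r < 1 → (1 - ENNReal.ofReal r)⁻¹ ≠ ∞ := fun r hr => by
      rw [ENNReal.inv_ne_top]
      exact (tsub_pos_of_lt (by simpa using hr)).ne'
    exact ENNReal.mul_ne_top (ENNReal.mul_ne_top ENNReal.ofReal_ne_top (hinv _ hsum))
      (hinv _ (inv_lt_one_of_one_lt₀ hz))
  filter_upwards [ae_eventually_notMem hfin] with ω hω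
  obtain ⟨N, hN⟩ := eventually_atTop.1 hω
  refine ⟨N, fun h hh => ?_⟩
  by_contra hlt
  have hcast : ((h.toNat : ℕ) : ℤ) = h := Int.toNat_of_nonneg (by omega)
  refine hN h.toNat (by omega) ?_
  simpa only [Set.mem_ofPred_eq, hcast] using hh

lemma sum_weight_lt_one (hd : 1 ≤ d) {α q : ℝ} (h0 : 0 ≤ α) (h1 : α < 1)
    (hq : q < 1 / 2 * (4 * d : ℝ) ^ (-(1 / (1 - α)))) :
    ∑ s : Step d, weight α q ((4 * d : ℝ) ^ (1 / (1 - α))) s < 1 := by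
  have hd' : (1 : ℝ) ≤ d := by exact_mod_cast hd
  have hpos : (0 : ℝ) < 4 * d := by linarith
  have hz0 : 0 < (4 * d : ℝ) ^ (1 / (1 - α)) := Real.rpow_pos_of_pos hpos _
  have hz1 : 1 ≤ (4 * d : ℝ) ^ (1 / (1 - α)) :=
    Real.one_le_rpow (by linarith) (one_div_nonneg.2 (by linarith))
  have hdown : q * (4 * d : ℝ) ^ (1 / (1 - α)) < 1 / 2 := by
    have := mul_lt_mul_of_pos_right hq hz0
    rwa [mul_assoc, ← Real.rpow_add hpos, neg_add_cancel, Real.rpow_zero, mul_one] at this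
  have hdiag : ∀ s : Fin d × Bool,
      weight α q ((4 * d : ℝ) ^ (1 / (1 - α))) (some s) ≤ (4 * d : ℝ)⁻¹ := by
    intro s
    have hexp : ((4 * d : ℝ) ^ (1 / (1 - α))) ^ (-(1 - α)) = (4 * d : ℝ)⁻¹ := by
      rw [← Real.rpow_mul hpos.le, mul_neg, one_div_mul_cancel (by linarith), Real.rpow_neg_one]
    rw [← hexp]
    refine Real.rpow_le_rpow_of_exponent_le hz1 ?_
    split_ifs <;> linarith
  rw [Fintype.sum_option]
  have hsum := Finset.sum_le_sum fun s (_ : s ∈ (Finset.univ : Finset (Fin d × Bool))) => hdiag s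
  have hcard : ∑ _s : Fin d × Bool, (4 * d : ℝ)⁻¹ = 1 / 2 := by
    simp only [Finset.sum_const, Finset.card_univ, Fintype.card_prod, Fintype.card_fin,
      Fintype.card_bool, nsmul_eq_mul]
    push_cast
    field_simp
    norm_num
  rw [hcard] at hsum
  have : weight α q ((4 * d : ℝ) ^ (1 / (1 - α))) (none : Step d) < 1 / 2 := hdown
  linarith

lemma planeHt_etaK_le (α : ℝ) (x : Fin d → ℤ) :
    (planeHt α (etaK d d) x : ℝ) ≤ α * ∑ i, (x i : ℝ) := by
  refine (Int.floor_le _).trans_eq ?_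
  simp [etaK]

lemma ae_mem_LIP (hd : 1 ≤ d) {α p : ℝ} (h0 : 0 ≤ α) (h1 : α < 1) {P : Measure (Config d)}
    (hP : IsBernoulli p P) (hp : p ≤ 1)
    (hq : 1 - p < 1 / 2 * (4 * d : ℝ) ^ (-(1 / (1 - α)))) :
    ∀ᵐ ω ∂P, ω ∈ LIP α (etaK d d) := by
  have hd' : (1 : ℝ) ≤ d := by exact_mod_cast hd
  have hz : 1 < (4 * d : ℝ) ^ (1 / (1 - α)) :=
    Real.one_lt_rpow (by linarith) (one_div_pos.2 (by linarith))
  filter_upwards [ae_all_iff.2 (ae_bddAbove_reachable hP hp hz (planeHt_etaK_le α)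
    (sum_weight_lt_one hd h0 h1 hq))] with ω hω
  exact exists_lipschitz_of_bddAbove hω

end TiltedLipschitz

/-- General lower bound: for all `d ≥ 1` and `α ∈ [0,1)`,
`q_L(α,d,d) = 1 − p_L(α,d,d) ≥ (1/2)·(4d)^{−1/(1−α)}`. -/
theorem qL_general_lower_bound
    {d : ℕ} (hd : 1 ≤ d) (α : ℝ) (hα : α ∈ Set.Ico (0 : ℝ) 1)
    (P : ℝ → Measure (Config d)) (hP : ∀ p ∈ Set.Icc (0 : ℝ) 1, IsBernoulli p (P p))
    (pc : ℝ) (hpc : IsCriticalProb P α (etaK d d) pc) :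
    1 - pc ≥ (1 / 2) * ((4 * d : ℝ)) ^ (-(1 / (1 - α))) := by
  obtain ⟨⟨hpc0, hpc1⟩, hbelow, -⟩ := hpc
  by_contra! hlt
  obtain ⟨p, hp, hp'⟩ := exists_between (max_lt hpc0 (sub_lt_comm.1 hlt))
  obtain ⟨hp0, hpq⟩ := max_lt_iff.1 hp
  have hB := hP p ⟨hp0.le, (hp'.trans hpc1).le⟩
  have := hB.1
  have hLIP := TiltedLipschitz.ae_mem_LIP hd hα.1 hα.2 hB (hp'.trans hpc1).le
    (sub_lt_comm.1 hpq)
  have hnot : ∀ᵐ ω ∂(P p), ω ∉ LIP α (etaK d d) :=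
    measure_eq_zero_iff_ae_notMem.1 (hbelow p hp0.le hp')
  obtain ⟨ω, h, h'⟩ := (hLIP.and hnot).exists
  exact h' h
end
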